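/- arXiv:1811.07843 — 5 statements merged into one kernel-verified Lean document; each statement's English description precedes it below -/
import Mathlib

section
/- C¹ regularity of the Euclidean-model unstable graph: In the setting of the Euclidean-model unstable manifold theorem — p, q ≥ 1; λ > 1, 0 ≤ κ < 1; A: ℝᵖ → ℝᵖ invertible linear with ‖A⁻¹‖ ≤ λ⁻¹; B: ℝ^q → ℝ^q linear with ‖B‖ ≤ κ; ρ: ℝ → (0,∞) monotonically decreasing with ρ(t) → 0 as t → ∞; f(t,u,s) = (t−1, A u + g₁(t,u,s), B s + g₂(t,u,s)) — assume in addition that g = (g₁,g₂) is continuously differentiable with ‖Dg(t,v)‖ ≤ C̃·ρ(t) for all (t,v), where Dg is the total derivative in all variables. Then t₁ can be chosen so that the unique invariant graph map σ: (t₁,∞) × ℝᵖ → ℝ^q (with ‖σ(t,u)‖ ≤ C·ρ(t), weighted spatial Lipschitz constant ≤ C·ρ(t), and f-invariant graph) is continuously differentiable, and its partial derivatives satisfy ‖∂ₜσ(t,u)‖ ≤ C·ρ(t) and ‖∂ᵤσ(t,u)‖ ≤ C·ρ(t) for all t > t₁ and u ∈ ℝᵖ (after possibly enlarging C). -/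
open BoundedContinuousFunction Filter Topology

section UnstableAux

set_option linter.unusedSectionVars false

/-- A bounded sequence as an element of `ℕ →ᵇ G`. -/
noncomputable def umSeq {G : Type*} [NormedAddCommGroup G] (f : ℕ → G) (C : ℝ)
    (h : ∀ n, ‖f n‖ ≤ C) : ℕ →ᵇ G :=
  BoundedContinuousFunction.ofNormedAddCommGroup f continuous_of_discreteTopology C h

@[simp] theorem umSeq_apply {G : Type*} [NormedAddCommGroup G] (f : ℕ → G) (C : ℝ)
    (h : ∀ n, ‖f n‖ ≤ C) (n : ℕ) : umSeq f C h n = f n := rfl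

/-- Forward shift of bounded sequences. -/
noncomputable def umShift (G : Type*) [NormedAddCommGroup G] [NormedSpace ℝ G] :
    (ℕ →ᵇ G) →L[ℝ] (ℕ →ᵇ G) :=
  LinearMap.mkContinuous
    { toFun := fun x => umSeq (fun n => x (n + 1)) ‖x‖ (fun n => x.norm_coe_le_norm _)
      map_add' := fun x y => by ext n; simp
      map_smul' := fun r x => by ext n; simp } 1
    (fun x => by
      rw [BoundedContinuousFunction.norm_le (by positivity)]
      intro n
      simpa using x.norm_coe_le_norm (n + 1))

@[simp] theorem umShift_apply {G : Type*} [NormedAddCommGroup G] [NormedSpace ℝ G]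
    (x : ℕ →ᵇ G) (n : ℕ) : umShift G x n = x (n + 1) := rfl

/-- Prepend an element to a sequence. -/
def umCons {G : Type*} (a : G) (x : ℕ → G) : ℕ → G
  | 0 => a
  | n + 1 => x n

@[simp] theorem umCons_zero {G : Type*} (a : G) (x : ℕ → G) : umCons a x 0 = a := rfl
@[simp] theorem umCons_succ {G : Type*} (a : G) (x : ℕ → G) (n : ℕ) :
    umCons a x (n + 1) = x n := rfl

theorem umCons_norm_le {G : Type*} [NormedAddCommGroup G] (a : G) (x : ℕ →ᵇ G) (n : ℕ) :
    ‖umCons a x n‖ ≤ max ‖a‖ ‖x‖ := by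
  cases n with
  | zero => simp
  | succ n => exact (x.norm_coe_le_norm n).trans (le_max_right _ _)

/-- Prepending as a continuous linear map. -/
noncomputable def umConsL (G : Type*) [NormedAddCommGroup G] [NormedSpace ℝ G] :
    (G × (ℕ →ᵇ G)) →L[ℝ] (ℕ →ᵇ G) :=
  LinearMap.mkContinuous
    { toFun := fun x => umSeq (umCons x.1 x.2) (max ‖x.1‖ ‖x.2‖) (umCons_norm_le _ _)
      map_add' := fun x y => by ext n; cases n <;> simp
      map_smul' := fun r x => by ext n; cases n <;> simp } 1
    (fun x => by
      rw [BoundedContinuousFunction.norm_le (by positivity)]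
      intro n
      simpa [Prod.norm_def] using umCons_norm_le x.1 x.2 n)

@[simp] theorem umConsL_apply {G : Type*} [NormedAddCommGroup G] [NormedSpace ℝ G]
    (x : G × (ℕ →ᵇ G)) (n : ℕ) : umConsL G x n = umCons x.1 x.2 n := rfl

/-- Pointwise action of a continuous linear map on bounded sequences. -/
noncomputable def umMap {G H : Type*} [NormedAddCommGroup G] [NormedSpace ℝ G]
    [NormedAddCommGroup H] [NormedSpace ℝ H] (L : G →L[ℝ] H) :
    (ℕ →ᵇ G) →L[ℝ] (ℕ →ᵇ H) :=
  LinearMap.mkContinuous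
    { toFun := fun x => umSeq (fun n => L (x n)) (‖L‖ * ‖x‖)
        (fun n => (L.le_opNorm _).trans
          (mul_le_mul_of_nonneg_left (x.norm_coe_le_norm n) (norm_nonneg _)))
      map_add' := fun x y => by ext n; simp
      map_smul' := fun r x => by ext n; simp } ‖L‖
    (fun x => by
      rw [BoundedContinuousFunction.norm_le (by positivity)]
      intro n
      exact (L.le_opNorm _).trans
          (mul_le_mul_of_nonneg_left (x.norm_coe_le_norm n) (norm_nonneg _)))

@[simp] theorem umMap_apply {G H : Type*} [NormedAddCommGroup G] [NormedSpace ℝ G]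
    [NormedAddCommGroup H] [NormedSpace ℝ H] (L : G →L[ℝ] H) (x : ℕ →ᵇ G) (n : ℕ) :
    umMap L x n = L (x n) := rfl

/-- Hypotheses on the nonlinearity. -/
structure UmHyp {V G : Type*} [NormedAddCommGroup V] [NormedSpace ℝ V]
    [NormedAddCommGroup G] [NormedSpace ℝ G] (c : ℝ → ℝ) (g : ℝ × V → G) : Prop where
  anti : Antitone c
  lim : Tendsto c atTop (𝓝 0)
  nonneg : ∀ t, 0 ≤ c t
  bdd : ∀ t v, ‖g (t, v)‖ ≤ c t
  smooth : ContDiff ℝ 1 g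
  der : ∀ z, ‖fderiv ℝ g z‖ ≤ c z.1

section Nem

variable {V G : Type*} [NormedAddCommGroup V] [NormedSpace ℝ V]
    [NormedAddCommGroup G] [NormedSpace ℝ G] {c : ℝ → ℝ} {g : ℝ × V → G}

theorem UmHyp.lip (h : UmHyp c g) {τ : ℝ} {z z' : ℝ × V} (hz : τ ≤ z.1) (hz' : τ ≤ z'.1) :
    ‖g z - g z'‖ ≤ c τ * ‖z - z'‖ := by
  have hconv : Convex ℝ {z : ℝ × V | τ ≤ z.1} :=
    convex_halfSpace_ge (LinearMap.fst ℝ ℝ V).isLinear τ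
  refine hconv.norm_image_sub_le_of_norm_fderiv_le (𝕜 := ℝ) (f := g)
    (fun x _ => (h.smooth.differentiable (by norm_num)).differentiableAt)
    (fun x hx => (h.der x).trans (h.anti hx)) hz' hz

/-- The base point in the `n`-th component. -/
def umPt (w : ℝ × (ℕ →ᵇ V)) (n : ℕ) : ℝ × V := (w.1 + n + 1, w.2 (n + 1))

theorem umPt_fst_ge (w : ℝ × (ℕ →ᵇ V)) (n : ℕ) : w.1 + 1 ≤ (umPt w n).1 := by
  have : (0:ℝ) ≤ n := n.cast_nonneg
  simp only [umPt]; linarith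

theorem umPt_fst_ge' (w : ℝ × (ℕ →ᵇ V)) (n : ℕ) : w.1 ≤ (umPt w n).1 := by
  have := umPt_fst_ge w n
  linarith

theorem umPt_sub (w w' : ℝ × (ℕ →ᵇ V)) (n : ℕ) :
    umPt w n - umPt w' n = ((w - w').1, (w - w').2 (n + 1)) := by
  ext <;> simp [umPt]

theorem um_pair_norm (w : ℝ × (ℕ →ᵇ V)) (n : ℕ) : ‖(w.1, w.2 n)‖ ≤ ‖w‖ := by
  simp only [Prod.norm_def]
  exact max_le_max le_rfl (w.2.norm_coe_le_norm n)

theorem umPt_sub_norm (w w' : ℝ × (ℕ →ᵇ V)) (n : ℕ) :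
    ‖umPt w n - umPt w' n‖ ≤ ‖w - w'‖ := by
  rw [umPt_sub]; exact um_pair_norm _ _

/-- The Nemytskii operator. -/
noncomputable def umNem (h : UmHyp c g) (w : ℝ × (ℕ →ᵇ V)) : ℕ →ᵇ G :=
  umSeq (fun n => g (umPt w n)) (c w.1)
    (fun n => (h.bdd _ _).trans (h.anti (umPt_fst_ge' w n)))

@[simp] theorem umNem_apply (h : UmHyp c g) (w : ℝ × (ℕ →ᵇ V)) (n : ℕ) :
    umNem h w n = g (umPt w n) := rfl

theorem umNemD_bound (h : UmHyp c g) (w k : ℝ × (ℕ →ᵇ V)) (n : ℕ) :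
    ‖fderiv ℝ g (umPt w n) (k.1, k.2 (n + 1))‖ ≤ c w.1 * ‖k‖ :=
  (ContinuousLinearMap.le_opNorm _ _).trans
    (mul_le_mul ((h.der _).trans (h.anti (umPt_fst_ge' w n))) (um_pair_norm _ _)
      (norm_nonneg _) (h.nonneg _))

/-- Its derivative. -/
noncomputable def umNemD (h : UmHyp c g) (w : ℝ × (ℕ →ᵇ V)) :
    (ℝ × (ℕ →ᵇ V)) →L[ℝ] (ℕ →ᵇ G) :=
  LinearMap.mkContinuous
    { toFun := fun k => umSeq (fun n => fderiv ℝ g (umPt w n) (k.1, k.2 (n + 1)))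
        (c w.1 * ‖k‖) (umNemD_bound h w k)
      map_add' := fun x y => by
        ext n
        simp only [umSeq_apply, BoundedContinuousFunction.add_apply, ← map_add]
        simp
      map_smul' := fun r x => by
        ext n
        simp only [umSeq_apply, BoundedContinuousFunction.smul_apply, ← map_smul,
          RingHom.id_apply]
        simp } (c w.1)
    (fun k => by
      rw [BoundedContinuousFunction.norm_le (mul_nonneg (h.nonneg _) (norm_nonneg _))]
      exact umNemD_bound h w k)

@[simp] theorem umNemD_apply (h : UmHyp c g) (w k : ℝ × (ℕ →ᵇ V)) (n : ℕ) :
    umNemD h w k n = fderiv ℝ g (umPt w n) (k.1, k.2 (n + 1)) := rfl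

theorem um_equicont (h : UmHyp c g) (w : ℝ × (ℕ →ᵇ V)) {ε : ℝ} (hε : 0 < ε) :
    ∃ δ > 0, ∀ n, ∀ z, ‖z - umPt w n‖ < δ →
      ‖fderiv ℝ g z - fderiv ℝ g (umPt w n)‖ ≤ ε := by
  have hev : ∀ᶠ t in atTop, c t < ε / 2 := h.lim.eventually (gt_mem_nhds (by positivity))
  obtain ⟨T0, hT0⟩ := eventually_atTop.1 hev
  obtain ⟨N, hN⟩ := exists_nat_ge (T0 - w.1)
  have hfin : ∀ M : ℕ, ∃ δ > 0, ∀ n < M, ∀ z, ‖z - umPt w n‖ < δ →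
      ‖fderiv ℝ g z - fderiv ℝ g (umPt w n)‖ ≤ ε := by
    intro M
    induction M with
    | zero => exact ⟨1, one_pos, by simp⟩
    | succ M ih =>
      obtain ⟨δ, hδ, H⟩ := ih
      have hc : Continuous (fderiv ℝ g) := h.smooth.continuous_fderiv (by norm_num)
      obtain ⟨δ', hδ', H'⟩ := Metric.continuousAt_iff.1 (hc.continuousAt (x := umPt w M)) ε hε
      refine ⟨min δ δ', lt_min hδ hδ', fun n hn z hz => ?_⟩
      rcases Nat.lt_succ_iff_lt_or_eq.1 hn with hn | rfl
      · exact H n hn z (hz.trans_le (min_le_left _ _))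
      · have := H' (x := z) (by rw [dist_eq_norm]; exact hz.trans_le (min_le_right _ _))
        rw [dist_eq_norm] at this
        exact this.le
  obtain ⟨δ, hδ, H⟩ := hfin N
  refine ⟨min δ 1, lt_min hδ one_pos, fun n z hz => ?_⟩
  rcases lt_or_ge n N with hn | hn
  · exact H n hn z (hz.trans_le (min_le_left _ _))
  · have h1 : |z.1 - (umPt w n).1| < 1 :=
      lt_of_le_of_lt (norm_fst_le (z - umPt w n)) (hz.trans_le (min_le_right _ _))
    have hn' : (N : ℝ) ≤ n := by exact_mod_cast hn
    have h2 : T0 ≤ z.1 := by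
      have := (abs_lt.1 h1).1
      simp only [umPt] at this
      linarith
    have h3 : T0 ≤ (umPt w n).1 := by simp only [umPt]; linarith
    have := norm_sub_le (fderiv ℝ g z) (fderiv ℝ g (umPt w n))
    have := h.der z
    have := h.der (umPt w n)
    have := hT0 _ h2
    have := hT0 _ h3
    linarith

theorem umNem_hasFDerivAt (h : UmHyp c g) (w : ℝ × (ℕ →ᵇ V)) :
    HasFDerivAt (umNem h) (umNemD h w) w := by
  rw [hasFDerivAt_iff_isLittleO, Asymptotics.isLittleO_iff]
  intro ε hε
  obtain ⟨δ, hδ, H⟩ := um_equicont h w hε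
  filter_upwards [Metric.ball_mem_nhds w hδ] with w' hw'
  rw [Metric.mem_ball, dist_eq_norm] at hw'
  rw [BoundedContinuousFunction.norm_le (by positivity)]
  intro n
  have key : ‖g (umPt w' n) - g (umPt w n) -
      fderiv ℝ g (umPt w n) (umPt w' n - umPt w n)‖ ≤ ε * ‖umPt w' n - umPt w n‖ := by
    refine (convex_ball (umPt w n) δ).norm_image_sub_le_of_norm_fderiv_le' (𝕜 := ℝ) (f := g)
      (fun x _ => (h.smooth.differentiable (by norm_num)).differentiableAt)
      (fun x hx => H n x (by rwa [Metric.mem_ball, dist_eq_norm] at hx))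
      (Metric.mem_ball_self hδ) ?_
    rw [Metric.mem_ball, dist_eq_norm]
    exact (umPt_sub_norm _ _ _).trans_lt hw'
  have h2 := key.trans (mul_le_mul_of_nonneg_left (umPt_sub_norm w' w n) hε.le)
  rw [umPt_sub] at h2
  exact h2

theorem umNem_contDiff (h : UmHyp c g) : ContDiff ℝ 1 (umNem h) := by
  rw [contDiff_one_iff_hasFDerivAt]
  refine ⟨umNemD h, ?_, umNem_hasFDerivAt h⟩
  rw [Metric.continuous_iff]
  intro w ε hε
  obtain ⟨δ, hδ, H⟩ := um_equicont h w (half_pos hε)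
  refine ⟨δ, hδ, fun w' hw' => ?_⟩
  rw [dist_eq_norm] at hw' ⊢
  refine lt_of_le_of_lt ?_ (half_lt_self hε)
  refine ContinuousLinearMap.opNorm_le_bound _ (by positivity) fun k => ?_
  rw [BoundedContinuousFunction.norm_le (by positivity)]
  intro n
  have := H n (umPt w' n) ((umPt_sub_norm _ _ _).trans_lt hw')
  have h2 : ‖(fderiv ℝ g (umPt w' n) - fderiv ℝ g (umPt w n)) (k.1, k.2 (n + 1))‖ ≤
      ε / 2 * ‖k‖ :=
    (ContinuousLinearMap.le_opNorm _ _).trans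
      (mul_le_mul this (um_pair_norm _ _) (norm_nonneg _) (by positivity))
  simpa using h2

end Nem

section Dyn

variable {E F : Type*} [NormedAddCommGroup E] [NormedSpace ℝ E] [CompleteSpace E]
    [NormedAddCommGroup F] [NormedSpace ℝ F] [CompleteSpace F]
    {c : ℝ → ℝ} {g : ℝ × (E × F) → E × F}
    (A : E ≃L[ℝ] E) (B : F →L[ℝ] F)

/-- The Lyapunov-Perron operator. -/
noncomputable def umT (h : UmHyp c g) (p : (ℝ × E) × (ℕ →ᵇ (E × F))) : ℕ →ᵇ (E × F) :=
  umConsL (E × F) ((p.1.2, 0),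
    umMap (((A.symm : E →L[ℝ] E).comp (ContinuousLinearMap.fst ℝ E F)).prod 0)
      (p.2 - umNem h (p.1.1, p.2))) +
  umMap ((0 : E × F →L[ℝ] E).prod (B.comp (ContinuousLinearMap.snd ℝ E F)))
    (umShift (E × F) p.2) +
  umMap ((0 : E × F →L[ℝ] E).prod (ContinuousLinearMap.snd ℝ E F)) (umNem h (p.1.1, p.2))

end Dyn

section Dyn2

variable {E F : Type*} [NormedAddCommGroup E] [NormedSpace ℝ E] [CompleteSpace E]
    [NormedAddCommGroup F] [NormedSpace ℝ F] [CompleteSpace F]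
    {c : ℝ → ℝ} {g : ℝ × (E × F) → E × F}
    {A : E ≃L[ℝ] E} {B : F →L[ℝ] F}

theorem umT_contDiff (h : UmHyp c g) : ContDiff ℝ 1 (umT A B h) := by
  have h1 : ContDiff ℝ 1 (fun p : (ℝ × E) × (ℕ →ᵇ (E × F)) => umNem h (p.1.1, p.2)) :=
    (umNem_contDiff h).comp (by fun_prop)
  unfold umT
  fun_prop

theorem umT_zero (h : UmHyp c g) (w : ℝ × E) (x : ℕ →ᵇ (E × F)) :
    umT A B h (w, x) 0 = (w.2, B (x 1).2 + (g (umPt (w.1, x) 0)).2) := by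
  simp [umT]

theorem umT_succ (h : UmHyp c g) (w : ℝ × E) (x : ℕ →ᵇ (E × F)) (n : ℕ) :
    umT A B h (w, x) (n + 1) = (A.symm ((x n).1 - (g (umPt (w.1, x) n)).1),
      B (x (n + 2)).2 + (g (umPt (w.1, x) (n + 1))).2) := by
  simp [umT]

theorem umT_snd (h : UmHyp c g) (w : ℝ × E) (x : ℕ →ᵇ (E × F)) (n : ℕ) :
    (umT A B h (w, x) n).2 = B (x (n + 1)).2 + (g (umPt (w.1, x) n)).2 := by
  cases n with
  | zero => rw [umT_zero]
  | succ n => rw [umT_succ]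

/-- Fixed points are exactly the bounded backward orbits. -/
theorem umT_fixed_iff (h : UmHyp c g) (w : ℝ × E) (x : ℕ →ᵇ (E × F)) :
    umT A B h (w, x) = x ↔ (x 0).1 = w.2 ∧ ∀ n : ℕ,
      x n = (A (x (n + 1)).1 + (g (w.1 + n + 1, x (n + 1))).1,
        B (x (n + 1)).2 + (g (w.1 + n + 1, x (n + 1))).2) := by
  constructor
  · intro hx
    have hx' : ∀ n, umT A B h (w, x) n = x n := fun n => by rw [hx]
    refine ⟨by rw [← hx' 0, umT_zero], fun n => ?_⟩
    refine Prod.ext ?_ ?_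
    · have h1 := congrArg Prod.fst (hx' (n + 1))
      rw [umT_succ] at h1
      have h2 : (x n).1 - (g (umPt (w.1, x) n)).1 = A (x (n + 1)).1 := by
        rw [← h1]; simp
      exact (sub_eq_iff_eq_add.1 h2)
    · have h1 := congrArg Prod.snd (hx' n)
      rw [umT_snd] at h1
      exact h1.symm
  · rintro ⟨h0, hn⟩
    ext1 n
    refine Prod.ext ?_ ?_
    · cases n with
      | zero => rw [umT_zero]; exact h0.symm
      | succ n =>
        rw [umT_succ]
        have h1 := congrArg Prod.fst (hn n)
        have h2 : (x n).1 - (g (umPt (w.1, x) n)).1 = A (x (n + 1)).1 :=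
          sub_eq_iff_eq_add.2 h1
        simp [h2]
    · rw [umT_snd]
      exact (congrArg Prod.snd (hn n)).symm

/-- Rate conditions. -/
structure UmRate (A : E ≃L[ℝ] E) (B : F →L[ℝ] F) (c : ℝ → ℝ) (t₁ l κ θ : ℝ) : Prop where
  l0 : 0 ≤ l
  l1 : l < 1
  hA : ∀ v, ‖A.symm v‖ ≤ l * ‖v‖
  κ0 : 0 ≤ κ
  hB : ∀ v, ‖B v‖ ≤ κ * ‖v‖
  hl : l * (1 + c t₁) ≤ θ
  hκ : κ + c t₁ ≤ θ
  hθ : θ < 1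

variable {t₁ l κ θ : ℝ}

theorem um_g_diff (h : UmHyp c g) {τ : ℝ} {w w' : ℝ × E} (hw : τ ≤ w.1) (hw' : τ ≤ w'.1)
    (x x' : ℕ →ᵇ (E × F)) (n : ℕ) :
    ‖g (umPt (w.1, x) n) - g (umPt (w'.1, x') n)‖ ≤ c (τ + 1) * max ‖w - w'‖ ‖x - x'‖ := by
  have h1 := h.lip (τ := τ + 1) (z := umPt (w.1, x) n) (z' := umPt (w'.1, x') n)
    (le_trans (by simpa using hw) (umPt_fst_ge _ n))
    (le_trans (by simpa using hw') (umPt_fst_ge _ n))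
  refine h1.trans (mul_le_mul_of_nonneg_left ?_ (h.nonneg _))
  refine (umPt_sub_norm _ _ n).trans ?_
  rw [Prod.norm_def]
  exact max_le_max (norm_fst_le (w - w')) le_rfl

theorem UmRate.θ0 (h : UmHyp c g) (R : UmRate A B c t₁ l κ θ) : 0 ≤ θ :=
  le_trans (add_nonneg R.κ0 (h.nonneg _)) R.hκ

theorem umT_diff (h : UmHyp c g) (R : UmRate A B c t₁ l κ θ) {w w' : ℝ × E}
    (hw : t₁ < w.1) (hw' : t₁ < w'.1) (x x' : ℕ →ᵇ (E × F)) :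
    ‖umT A B h (w, x) - umT A B h (w', x')‖ ≤ ‖w - w'‖ + θ * ‖x - x'‖ := by
  have hθ0 := R.θ0 h
  have hθ := R.hθ
  have hl := R.hl
  have hκ := R.hκ
  have hl0 := R.l0
  have hκ0 := R.κ0
  have he := h.nonneg t₁
  have hW := norm_nonneg (w - w')
  have hX := norm_nonneg (x - x')
  have hgd : ∀ n, ‖g (umPt (w.1, x) n) - g (umPt (w'.1, x') n)‖ ≤
      c t₁ * (‖w - w'‖ + ‖x - x'‖) := fun n =>
    (um_g_diff h hw.le hw'.le x x' n).trans
      (mul_le_mul (h.anti (by linarith)) (max_le_add_of_nonneg hW hX) (by positivity) he)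
  have hxn : ∀ n, ‖x n - x' n‖ ≤ ‖x - x'‖ := fun n => (x - x').norm_coe_le_norm n
  rw [BoundedContinuousFunction.norm_le (by positivity)]
  intro n
  rw [BoundedContinuousFunction.sub_apply, Prod.norm_def]
  refine max_le ?_ ?_
  · cases n with
    | zero =>
      rw [umT_zero, umT_zero]
      have : ‖w.2 - w'.2‖ ≤ ‖w - w'‖ := norm_snd_le (w - w')
      refine le_trans this ?_
      have := mul_nonneg hθ0 hX
      linarith
    | succ n =>
      rw [umT_succ, umT_succ]
      simp only [Prod.fst_sub, ← map_sub]
      refine (R.hA _).trans ?_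
      have h1 : ‖(x n).1 - (g (umPt (w.1, x) n)).1 - ((x' n).1 - (g (umPt (w'.1, x') n)).1)‖ ≤
          ‖x - x'‖ + c t₁ * (‖w - w'‖ + ‖x - x'‖) := by
        rw [sub_sub_sub_comm]
        refine (norm_sub_le _ _).trans (add_le_add ?_ ?_)
        · exact (norm_fst_le (x n - x' n)).trans (hxn n)
        · exact (norm_fst_le (g (umPt (w.1, x) n) - g (umPt (w'.1, x') n))).trans (hgd n)
      refine (mul_le_mul_of_nonneg_left h1 hl0).trans ?_
      have h2 : l * c t₁ ≤ 1 := by nlinarith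
      have h3 := mul_le_mul_of_nonneg_right hl hX
      have h4 := mul_le_mul_of_nonneg_right h2 hW
      nlinarith
  · rw [Prod.snd_sub, umT_snd, umT_snd, add_sub_add_comm, ← map_sub]
    refine (norm_add_le _ _).trans ?_
    have h1 : ‖B ((x (n + 1)).2 - (x' (n + 1)).2)‖ ≤ κ * ‖x - x'‖ :=
      (R.hB _).trans (mul_le_mul_of_nonneg_left
        ((norm_snd_le (x (n + 1) - x' (n + 1))).trans (hxn _)) hκ0)
    have h2 := (norm_snd_le (g (umPt (w.1, x) n) - g (umPt (w'.1, x') n))).trans (hgd n)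
    have h3 := mul_le_mul_of_nonneg_right hκ hX
    have h4 : c t₁ * ‖w - w'‖ ≤ 1 * ‖w - w'‖ := mul_le_mul_of_nonneg_right (by linarith) hW
    have h5 : ‖(g (umPt (w.1, x) n)).2 - (g (umPt (w'.1, x') n)).2‖ ≤
      c t₁ * (‖w - w'‖ + ‖x - x'‖) := h2
    nlinarith

theorem umT_exists (h : UmHyp c g) (R : UmRate A B c t₁ l κ θ) (w : ℝ × E) :
    ∃ x : ℕ →ᵇ (E × F), t₁ < w.1 → umT A B h (w, x) = x := by
  by_cases hw : t₁ < w.1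
  · have hc : ContractingWith ⟨θ, R.θ0 h⟩ (fun x => umT A B h (w, x)) := by
      refine ⟨R.hθ, LipschitzWith.of_dist_le_mul fun x y => ?_⟩
      rw [dist_eq_norm, dist_eq_norm]
      have h1 := umT_diff h R hw hw x y
      rw [sub_self, norm_zero, zero_add] at h1
      exact h1
    exact ⟨hc.fixedPoint, fun _ => hc.fixedPoint_isFixedPt⟩
  · exact ⟨0, fun h' => absurd h' hw⟩

theorem umT_fixed_lip (h : UmHyp c g) (R : UmRate A B c t₁ l κ θ) {w w' : ℝ × E}
    (hw : t₁ < w.1) (hw' : t₁ < w'.1) {x x' : ℕ →ᵇ (E × F)}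
    (hx : umT A B h (w, x) = x) (hx' : umT A B h (w', x') = x') :
    ‖x - x'‖ ≤ ‖w - w'‖ / (1 - θ) := by
  have h1 := umT_diff h R hw hw' x x'
  rw [hx, hx'] at h1
  rw [le_div_iff₀ (by linarith [R.hθ])]
  linarith

theorem umT_fixed_unique (h : UmHyp c g) (R : UmRate A B c t₁ l κ θ) {w : ℝ × E}
    (hw : t₁ < w.1) {x x' : ℕ →ᵇ (E × F)}
    (hx : umT A B h (w, x) = x) (hx' : umT A B h (w, x') = x') : x = x' := by
  have h1 := umT_fixed_lip h R hw hw hx hx'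
  rw [sub_self, norm_zero, zero_div] at h1
  exact sub_eq_zero.1 (norm_le_zero_iff.1 h1)

/-- The fixed point. -/
noncomputable def umX (h : UmHyp c g) (R : UmRate A B c t₁ l κ θ) (w : ℝ × E) : ℕ →ᵇ (E × F) :=
  Classical.choose (umT_exists h R w)

theorem umX_fixed (h : UmHyp c g) (R : UmRate A B c t₁ l κ θ) {w : ℝ × E} (hw : t₁ < w.1) :
    umT A B h (w, umX h R w) = umX h R w :=
  Classical.choose_spec (umT_exists h R w) hw

theorem umX_continuousAt (h : UmHyp c g) (R : UmRate A B c t₁ l κ θ) {w : ℝ × E}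
    (hw : t₁ < w.1) : ContinuousAt (umX h R) w := by
  have hev : ∀ᶠ w' : ℝ × E in 𝓝 w, t₁ < w'.1 :=
    continuous_fst.continuousAt.eventually (lt_mem_nhds hw)
  rw [ContinuousAt, tendsto_iff_norm_sub_tendsto_zero]
  refine squeeze_zero' (g := fun w' => ‖w' - w‖ / (1 - θ))
    (Eventually.of_forall fun _ => norm_nonneg _) ?_ ?_
  · filter_upwards [hev] with w' hw'
    exact umT_fixed_lip h R hw' hw (umX_fixed h R hw') (umX_fixed h R hw)
  · have : Continuous fun w' : ℝ × E => ‖w' - w‖ / (1 - θ) := by fun_prop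
    simpa using this.tendsto w

theorem umX_contDiffAt (h : UmHyp c g) (R : UmRate A B c t₁ l κ θ) {w : ℝ × E}
    (hw : t₁ < w.1) : ContDiffAt ℝ 1 (umX h R) w := by
  set u : (ℝ × E) × (ℕ →ᵇ (E × F)) := (w, umX h R w) with hu
  let Φ : (ℝ × E) × (ℕ →ᵇ (E × F)) → (ℕ →ᵇ (E × F)) := fun p => p.2 - umT A B h p
  have hT : ContDiff ℝ 1 (umT A B h) := umT_contDiff h
  have hTd : HasFDerivAt (umT A B h) (fderiv ℝ (umT A B h) u) u :=
    (hT.differentiable (by norm_num)).differentiableAt.hasFDerivAt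
  have cdf : ContDiffAt ℝ 1 Φ u := by
    have : ContDiff ℝ 1 Φ := by fun_prop
    exact this.contDiffAt
  have hΦd : fderiv ℝ Φ u = ContinuousLinearMap.snd ℝ _ _ - fderiv ℝ (umT A B h) u :=
    (hasFDerivAt_snd.sub hTd).fderiv
  set D := (fderiv ℝ (umT A B h) u).comp
    (ContinuousLinearMap.inr ℝ (ℝ × E) (ℕ →ᵇ (E × F))) with hD
  have hDn : ‖D‖ ≤ θ := by
    have h1 : HasFDerivAt (fun x => umT A B h (w, x)) D (umX h R w) :=
      HasFDerivAt.comp (umX h R w) hTd (hasFDerivAt_prodMk_right w (umX h R w))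
    refine h1.le_of_lip' (R.θ0 h) (Eventually.of_forall fun x => ?_)
    simpa using umT_diff h R hw hw x (umX h R w)
  have if₂ : (fderiv ℝ Φ u ∘L .inr ℝ (ℝ × E) (ℕ →ᵇ (E × F))).IsInvertible := by
    have hlt : ‖D‖ < 1 := hDn.trans_lt R.hθ
    refine ⟨ContinuousLinearEquiv.ofUnit (Units.oneSub D hlt), ?_⟩
    rw [hΦd]
    ext1 x
    simp [ContinuousLinearEquiv.ofUnit, hD]
  have hΦu : Φ u = 0 := by
    simp only [Φ, hu, umX_fixed h R hw, sub_self]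
  have hct : Tendsto (fun w' => (w', umX h R w')) (𝓝 w) (𝓝 u) :=
    (continuousAt_id.prodMk (umX_continuousAt h R hw))
  have hev : ∀ᶠ w' : ℝ × E in 𝓝 w, t₁ < w'.1 :=
    continuous_fst.continuousAt.eventually (lt_mem_nhds hw)
  have h2 := hct.eventually (cdf.eventually_apply_eq_iff_implicitFunction one_ne_zero if₂)
  have h3 : ContDiffAt ℝ 1 (cdf.implicitFunction one_ne_zero if₂) w :=
    cdf.contDiffAt_implicitFunction one_ne_zero if₂
  refine h3.congr_of_eventuallyEq ?_
  filter_upwards [h2, hev] with w' hw' hlt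
  refine (hw'.1 ?_).symm
  rw [hΦu]
  simp only [Φ, umX_fixed h R hlt, sub_self]

/-- The graph map. -/
noncomputable def umS (h : UmHyp c g) (R : UmRate A B c t₁ l κ θ) (w : ℝ × E) : F :=
  (umX h R w 0).2

theorem umS_contDiffAt (h : UmHyp c g) (R : UmRate A B c t₁ l κ θ) {w : ℝ × E}
    (hw : t₁ < w.1) : ContDiffAt ℝ 1 (umS h R) w := by
  have h1 := umX_contDiffAt h R hw
  have h2 : ContDiff ℝ 1 (fun x : ℕ →ᵇ (E × F) => (x 0).2) :=
    ((ContinuousLinearMap.snd ℝ E F).comp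
      (BoundedContinuousFunction.evalCLM ℝ (0 : ℕ))).contDiff
  exact h2.contDiffAt.comp w h1

theorem umS_bound (h : UmHyp c g) (R : UmRate A B c t₁ l κ θ) {w : ℝ × E}
    (hw : t₁ < w.1) : ‖umS h R w‖ ≤ c w.1 / (1 - κ) := by
  set x := umX h R w with hx
  have hfix := umX_fixed h R hw
  rw [← hx] at hfix
  set s := umMap (ContinuousLinearMap.snd ℝ E F) x with hs
  have hκ0 := R.κ0
  have hκ1 : κ < 1 := by linarith [R.hκ, R.hθ, h.nonneg t₁]
  have h1 : ‖s‖ ≤ κ * ‖s‖ + c w.1 := by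
    rw [BoundedContinuousFunction.norm_le
      (add_nonneg (mul_nonneg hκ0 (norm_nonneg _)) (h.nonneg _))]
    intro n
    have e : s n = B (s (n + 1)) + (g (umPt (w.1, x) n)).2 := by
      have e0 := umT_snd (A := A) (B := B) h w x n
      rw [hfix] at e0
      exact e0
    rw [e]
    refine (norm_add_le _ _).trans (add_le_add ?_ ?_)
    · exact (R.hB _).trans (mul_le_mul_of_nonneg_left (s.norm_coe_le_norm _) hκ0)
    · exact (norm_snd_le (g (umPt (w.1, x) n))).trans ((umNem h (w.1, x)).norm_coe_le_norm n |>.trans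
        ((BoundedContinuousFunction.norm_le (h.nonneg _)).2 fun n =>
          (h.bdd _ _).trans (h.anti (umPt_fst_ge' (w.1, x) n))))
  have h2 : ‖umS h R w‖ ≤ ‖s‖ := s.norm_coe_le_norm 0
  rw [le_div_iff₀ (by linarith)]
  nlinarith

theorem umS_lip (h : UmHyp c g) (R : UmRate A B c t₁ l κ θ) {τ : ℝ} {w w' : ℝ × E}
    (hw : t₁ < w.1) (hw' : t₁ < w'.1) (hτ : τ ≤ w.1) (hτ' : τ ≤ w'.1) :
    ‖umS h R w - umS h R w'‖ ≤ c (τ + 1) / ((1 - θ) * (1 - κ)) * ‖w - w'‖ := by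
  set x := umX h R w with hx
  have hfix := umX_fixed h R hw
  rw [← hx] at hfix
  set x' := umX h R w' with hx'
  have hfix' := umX_fixed h R hw'
  rw [← hx'] at hfix'
  set s := umMap (ContinuousLinearMap.snd ℝ E F) (x - x') with hs
  have hκ0 := R.κ0
  have hθ := R.hθ
  have hθ0 := R.θ0 h
  have hκ1 : κ < 1 := by linarith [R.hκ, R.hθ, h.nonneg t₁]
  have hxx : max ‖w - w'‖ ‖x - x'‖ ≤ ‖w - w'‖ / (1 - θ) := by
    refine max_le ?_ (umT_fixed_lip h R hw hw' hfix hfix')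
    rw [le_div_iff₀ (by linarith)]
    nlinarith [norm_nonneg (w - w')]
  have hpos : 0 ≤ ‖w - w'‖ / (1 - θ) := div_nonneg (norm_nonneg _) (by linarith)
  have h1 : ‖s‖ ≤ κ * ‖s‖ + c (τ + 1) * (‖w - w'‖ / (1 - θ)) := by
    rw [BoundedContinuousFunction.norm_le
      (add_nonneg (mul_nonneg hκ0 (norm_nonneg _)) (mul_nonneg (h.nonneg _) hpos))]
    intro n
    have e : (x n).2 = B (x (n + 1)).2 + (g (umPt (w.1, x) n)).2 := by
      rw [← umT_snd (A := A) h w x n, hfix]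
    have e' : (x' n).2 = B (x' (n + 1)).2 + (g (umPt (w'.1, x') n)).2 := by
      rw [← umT_snd (A := A) h w' x' n, hfix']
    have e2 : s n = B (s (n + 1)) +
        ((g (umPt (w.1, x) n)).2 - (g (umPt (w'.1, x') n)).2) := by
      have e3 : s n = (x n).2 - (x' n).2 := rfl
      have e4 : s (n + 1) = (x (n + 1)).2 - (x' (n + 1)).2 := rfl
      rw [e3, e4, e, e', map_sub]; abel
    rw [e2]
    refine (norm_add_le _ _).trans (add_le_add ?_ ?_)
    · exact (R.hB _).trans (mul_le_mul_of_nonneg_left (s.norm_coe_le_norm _) hκ0)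
    · exact (norm_snd_le (g (umPt (w.1, x) n) - g (umPt (w'.1, x') n))).trans
        ((um_g_diff h hτ hτ' x x' n).trans (mul_le_mul_of_nonneg_left hxx (h.nonneg _)))
  have h2 : ‖umS h R w - umS h R w'‖ ≤ ‖s‖ := s.norm_coe_le_norm 0
  have h3 : ‖s‖ ≤ c (τ + 1) * (‖w - w'‖ / (1 - θ)) / (1 - κ) := by
    rw [le_div_iff₀ (by linarith)]
    linarith
  refine h2.trans (h3.trans (le_of_eq ?_))
  have : 1 - θ ≠ 0 := by linarith
  have : 1 - κ ≠ 0 := by linarith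
  field_simp

/-- Any bounded backward orbit lies on the graph. -/
theorem umS_of_orbit (h : UmHyp c g) (R : UmRate A B c t₁ l κ θ) {t : ℝ} (ht : t₁ < t)
    (x : ℕ →ᵇ (E × F)) (hx : ∀ n : ℕ,
      x n = (A (x (n + 1)).1 + (g (t + n + 1, x (n + 1))).1,
        B (x (n + 1)).2 + (g (t + n + 1, x (n + 1))).2)) :
    umS h R (t, (x 0).1) = (x 0).2 := by
  have h1 : umT A B h ((t, (x 0).1), x) = x :=
    (umT_fixed_iff h (t, (x 0).1) x).2 ⟨rfl, hx⟩
  have h2 := umT_fixed_unique h R (w := (t, (x 0).1)) ht (umX_fixed h R ht) h1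
  simp only [umS]
  rw [h2]

/-- Points on the graph have a bounded backward orbit. -/
theorem umS_orbit (h : UmHyp c g) (R : UmRate A B c t₁ l κ θ) {t : ℝ} (ht : t₁ < t) (u : E) :
    ∃ x : ℕ →ᵇ (E × F), x 0 = (u, umS h R (t, u)) ∧ ∀ n : ℕ,
      x n = (A (x (n + 1)).1 + (g (t + n + 1, x (n + 1))).1,
        B (x (n + 1)).2 + (g (t + n + 1, x (n + 1))).2) := by
  have h1 := (umT_fixed_iff h (t, u) _).1 (umX_fixed h R (w := (t, u)) ht)
  exact ⟨umX h R (t, u), Prod.ext h1.1 rfl, h1.2⟩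

theorem umS_forward (h : UmHyp c g) (R : UmRate A B c t₁ l κ θ) {t : ℝ} (ht : t₁ + 1 < t)
    (u : E) :
    umS h R (t - 1, A u + (g (t, (u, umS h R (t, u)))).1) =
      B (umS h R (t, u)) + (g (t, (u, umS h R (t, u)))).2 := by
  obtain ⟨x, hx0, hx⟩ := umS_orbit h R (t := t) (by linarith) u
  set a : E × F := (A (x 0).1 + (g (t, x 0)).1, B (x 0).2 + (g (t, x 0)).2) with ha
  have h1 := umS_of_orbit h R (t := t - 1) (by linarith) (umConsL (E × F) (a, x)) (by
    intro n
    cases n with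
    | zero => simp [ha]
    | succ n =>
      simp only [umConsL_apply, umCons_succ]
      rw [hx n]
      have e : t - 1 + ((n + 1 : ℕ) : ℝ) + 1 = t + n + 1 := by push_cast; ring
      rw [e])
  simp only [umConsL_apply, umCons_zero, ha, hx0] at h1
  exact h1

theorem umS_backward (h : UmHyp c g) (R : UmRate A B c t₁ l κ θ) {t : ℝ} (ht : t₁ < t)
    (u : E) : ∃ u' : E,
      A u' + (g (t + 1, (u', umS h R (t + 1, u')))).1 = u ∧
      B (umS h R (t + 1, u')) + (g (t + 1, (u', umS h R (t + 1, u')))).2 = umS h R (t, u) := by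
  obtain ⟨x, hx0, hx⟩ := umS_orbit h R ht u
  have h1 := umS_of_orbit h R (t := t + 1) (by linarith) (umShift (E × F) x) (by
    intro n
    simp only [umShift_apply]
    rw [hx (n + 1)]
    have e : t + ((n + 1 : ℕ) : ℝ) + 1 = t + 1 + n + 1 := by push_cast; ring
    rw [e])
  simp only [umShift_apply, zero_add] at h1
  refine ⟨(x 1).1, ?_⟩
  rw [h1]
  have h2 := hx 0
  simp only [hx0, Nat.cast_zero, add_zero, zero_add, Prod.mk.injEq] at h2
  exact ⟨h2.1.symm, h2.2.symm⟩

/-- Uniqueness of the invariant graph. -/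
theorem umS_unique (h : UmHyp c g) (R : UmRate A B c t₁ l κ θ) {K : ℝ} (σ : ℝ × E → F)
    (hK : ∀ t u, t₁ < t → ‖σ (t, u)‖ ≤ K)
    (hinv : ∀ t u, t₁ < t → ∃ u' : E,
      A u' + (g (t + 1, (u', σ (t + 1, u')))).1 = u ∧
      B (σ (t + 1, u')) + (g (t + 1, (u', σ (t + 1, u')))).2 = σ (t, u))
    {t : ℝ} (ht : t₁ < t) (u : E) : σ (t, u) = umS h R (t, u) := by
  choose! b hb1 hb2 using hinv
  let U : ℕ → E := fun n => Nat.rec u (fun n v => b (t + n) v) n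
  have hU : ∀ n, U (n + 1) = b (t + n) (U n) := fun n => rfl
  have htn : ∀ n : ℕ, t₁ < t + n := fun n => by
    have : (0:ℝ) ≤ n := n.cast_nonneg
    linarith
  have e1 : ∀ n : ℕ, A (U (n + 1)) + (g (t + n + 1, (U (n + 1), σ (t + n + 1, U (n + 1))))).1
      = U n := fun n => hb1 (t + n) (U n) (htn n)
  have e2 : ∀ n : ℕ, B (σ (t + n + 1, U (n + 1))) +
      (g (t + n + 1, (U (n + 1), σ (t + n + 1, U (n + 1))))).2
      = σ (t + n, U n) := fun n => hb2 (t + n) (U n) (htn n)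
  have hl := R.l1
  have hl0 := R.l0
  have hct := h.nonneg t₁
  set M := ‖u‖ + c t₁ / (1 - l) with hM
  have hMb : ∀ n, ‖U n‖ ≤ M := by
    intro n
    induction n with
    | zero =>
      have : 0 ≤ c t₁ / (1 - l) := div_nonneg hct (by linarith)
      have : U 0 = u := rfl
      rw [this]; linarith
    | succ n ih =>
      have e3 : U (n + 1) =
          A.symm (U n - (g (t + n + 1, (U (n + 1), σ (t + n + 1, U (n + 1))))).1) := by
        have := eq_sub_of_add_eq (e1 n)
        rw [← this]; simp
      have e4 : ‖(g (t + n + 1, (U (n + 1), σ (t + n + 1, U (n + 1))))).1‖ ≤ c t₁ :=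
        (norm_fst_le _).trans ((h.bdd _ _).trans (h.anti (by linarith [htn n])))
      rw [e3]
      refine (R.hA _).trans ((mul_le_mul_of_nonneg_left ((norm_sub_le _ _).trans
        (add_le_add ih e4)) hl0).trans ?_)
      have e5 : (c t₁ / (1 - l)) * (1 - l) = c t₁ := div_mul_cancel₀ _ (by linarith)
      have e6 : c t₁ ≤ M * (1 - l) := by
        rw [hM, add_mul, e5]
        have := mul_nonneg (norm_nonneg u) (by linarith : 0 ≤ 1 - l)
        linarith
      nlinarith
  let x : ℕ →ᵇ (E × F) := umSeq (fun n => (U n, σ (t + n, U n))) (max M K) (fun n => by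
    rw [Prod.norm_def]
    exact max_le_max (hMb n) (hK _ _ (htn n)))
  have hxn : ∀ n, x n = (U n, σ (t + n, U n)) := fun n => rfl
  have h1 := umS_of_orbit h R ht x (by
    intro n
    rw [hxn, hxn]
    have e : t + ((n + 1 : ℕ) : ℝ) = t + n + 1 := by push_cast; ring
    rw [e]
    exact Prod.ext (e1 n).symm (e2 n).symm)
  simp only [hxn, Nat.cast_zero, add_zero] at h1
  exact h1.symm

end Dyn2

end UnstableAux

/-- C¹ regularity of the Euclidean-model unstable graph: if the perturbation is
continuously differentiable with derivative bounded by `C̃ * ρ t`, then the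
unique invariant graph map is continuously differentiable with partial
derivatives bounded by `C * ρ t`. -/
theorem euclidean_model_unstable_manifold_C1
    (p q : ℕ) (hp : 1 ≤ p) (hq : 1 ≤ q)
    (lam kap : ℝ) (hlam : 1 < lam) (hkap0 : 0 ≤ kap) (hkap1 : kap < 1)
    (A : EuclideanSpace ℝ (Fin p) ≃L[ℝ] EuclideanSpace ℝ (Fin p))
    (hA : ‖(A.symm : EuclideanSpace ℝ (Fin p) →L[ℝ] EuclideanSpace ℝ (Fin p))‖ ≤ lam⁻¹)
    (B : EuclideanSpace ℝ (Fin q) →L[ℝ] EuclideanSpace ℝ (Fin q))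
    (hB : ‖B‖ ≤ kap)
    (ρ : ℝ → ℝ) (hρpos : ∀ t, 0 < ρ t) (hρanti : Antitone ρ)
    (hρ0 : Filter.Tendsto ρ Filter.atTop (nhds 0))
    (Ct : ℝ) (hCt : 0 ≤ Ct)
    (g : ℝ × (EuclideanSpace ℝ (Fin p) × EuclideanSpace ℝ (Fin q)) →
      EuclideanSpace ℝ (Fin p) × EuclideanSpace ℝ (Fin q))
    (hgbdd : ∀ t v, ‖g (t, v)‖ ≤ Ct * ρ t)
    (hgLip : ∀ t v v', ‖g (t, v) - g (t, v')‖ ≤ Ct * ρ t * ‖v - v'‖)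
    (hgC1 : ContDiff ℝ 1 g)
    (hgD : ∀ z, ‖fderiv ℝ g z‖ ≤ Ct * ρ z.1)
    (f : ℝ × EuclideanSpace ℝ (Fin p) × EuclideanSpace ℝ (Fin q) →
      ℝ × EuclideanSpace ℝ (Fin p) × EuclideanSpace ℝ (Fin q))
    (hf : ∀ t u s,
      f (t, u, s) = (t - 1, A u + (g (t, (u, s))).1, B s + (g (t, (u, s))).2)) :
    ∃ (t₁ C : ℝ) (σ : ℝ × EuclideanSpace ℝ (Fin p) → EuclideanSpace ℝ (Fin q)),
      0 ≤ C ∧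
      (∀ t u, t₁ < t → ‖σ (t, u)‖ ≤ C * ρ t) ∧
      (∀ t u u', t₁ < t → ‖σ (t, u) - σ (t, u')‖ ≤ C * ρ t * ‖u - u'‖) ∧
      (f '' {w : ℝ × EuclideanSpace ℝ (Fin p) × EuclideanSpace ℝ (Fin q) |
          t₁ + 1 < w.1 ∧ w.2.2 = σ (w.1, w.2.1)} =
        {w : ℝ × EuclideanSpace ℝ (Fin p) × EuclideanSpace ℝ (Fin q) |
          t₁ < w.1 ∧ w.2.2 = σ (w.1, w.2.1)}) ∧
      (∀ (C' : ℝ) (σ' : ℝ × EuclideanSpace ℝ (Fin p) → EuclideanSpace ℝ (Fin q)),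
        0 ≤ C' →
        (∀ t u, t₁ < t → ‖σ' (t, u)‖ ≤ C' * ρ t) →
        (∀ t u u', t₁ < t → ‖σ' (t, u) - σ' (t, u')‖ ≤ C' * ρ t * ‖u - u'‖) →
        (f '' {w : ℝ × EuclideanSpace ℝ (Fin p) × EuclideanSpace ℝ (Fin q) |
            t₁ + 1 < w.1 ∧ w.2.2 = σ' (w.1, w.2.1)} =
          {w : ℝ × EuclideanSpace ℝ (Fin p) × EuclideanSpace ℝ (Fin q) |
            t₁ < w.1 ∧ w.2.2 = σ' (w.1, w.2.1)}) →
        ∀ t u, t₁ < t → σ' (t, u) = σ (t, u)) ∧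
      ContDiffOn ℝ 1 σ {w : ℝ × EuclideanSpace ℝ (Fin p) | t₁ < w.1} ∧
      (∀ t u, t₁ < t → ‖deriv (fun s : ℝ => σ (s, u)) t‖ ≤ C * ρ t) ∧
      (∀ t u, t₁ < t →
        ‖fderiv ℝ (fun v : EuclideanSpace ℝ (Fin p) => σ (t, v)) u‖ ≤ C * ρ t) := by
  have hlam0 : 0 < lam := by linarith
  have hCρ : UmHyp (fun t => Ct * ρ t) g :=
    { anti := fun a b hab => mul_le_mul_of_nonneg_left (hρanti hab) hCt
      lim := by simpa using hρ0.const_mul Ct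
      nonneg := fun t => mul_nonneg hCt (hρpos t).le
      bdd := hgbdd
      smooth := hgC1
      der := hgD }
  obtain ⟨ε, hε0, hε1, hε2⟩ : ∃ ε > 0, 1 + ε < lam ∧ kap + ε < 1 := by
    refine ⟨min ((lam - 1) / 2) ((1 - kap) / 2), lt_min (by linarith) (by linarith), ?_, ?_⟩
    · have := min_le_left ((lam - 1) / 2) ((1 - kap) / 2)
      linarith
    · have := min_le_right ((lam - 1) / 2) ((1 - kap) / 2)
      linarith
  obtain ⟨t₁, ht₁⟩ := (hCρ.lim.eventually (gt_mem_nhds hε0)).exists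
  set θ := max (lam⁻¹ * (1 + ε)) (kap + ε) with hθdef
  have hinv0 : 0 ≤ lam⁻¹ := by positivity
  have R : UmRate A B (fun t => Ct * ρ t) t₁ lam⁻¹ kap θ :=
    { l0 := hinv0
      l1 := inv_lt_one_of_one_lt₀ hlam
      hA := fun v => ((A.symm : EuclideanSpace ℝ (Fin p) →L[ℝ] EuclideanSpace ℝ (Fin p)).le_opNorm
        v).trans (mul_le_mul_of_nonneg_right hA (norm_nonneg _))
      κ0 := hkap0
      hB := fun v => (B.le_opNorm v).trans (mul_le_mul_of_nonneg_right hB (norm_nonneg _))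
      hl := le_trans (mul_le_mul_of_nonneg_left (by simpa using ht₁.le) hinv0) (le_max_left _ _)
      hκ := le_trans (by simpa using ht₁.le) (le_max_right _ _)
      hθ := max_lt (by rw [inv_mul_lt_iff₀ hlam0]; linarith) hε2 }
  have hθ0 := R.θ0 hCρ
  have hθ1 := R.hθ
  have hden : 0 < (1 - θ) * (1 - kap) := mul_pos (by linarith) (by linarith)
  have hC0 : 0 ≤ Ct / ((1 - θ) * (1 - kap)) := div_nonneg hCt hden.le
  have hlip : ∀ (t : ℝ) (w w' : ℝ × EuclideanSpace ℝ (Fin p)), t₁ < w.1 → t₁ < w'.1 →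
      t - 1 ≤ w.1 → t - 1 ≤ w'.1 →
      ‖umS hCρ R w - umS hCρ R w'‖ ≤ Ct / ((1 - θ) * (1 - kap)) * ρ t * ‖w - w'‖ := by
    intro t w w' h1 h2 h3 h4
    have := umS_lip hCρ R h1 h2 h3 h4
    rw [sub_add_cancel] at this
    refine this.trans (le_of_eq ?_)
    ring
  have hinvar : ∀ (σ : ℝ × EuclideanSpace ℝ (Fin p) → EuclideanSpace ℝ (Fin q)),
      {w : ℝ × EuclideanSpace ℝ (Fin p) × EuclideanSpace ℝ (Fin q) |
          t₁ < w.1 ∧ w.2.2 = σ (w.1, w.2.1)} ⊆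
      f '' {w : ℝ × EuclideanSpace ℝ (Fin p) × EuclideanSpace ℝ (Fin q) |
          t₁ + 1 < w.1 ∧ w.2.2 = σ (w.1, w.2.1)} ↔
      ∀ t u, t₁ < t → ∃ u' : EuclideanSpace ℝ (Fin p),
      A u' + (g (t + 1, (u', σ (t + 1, u')))).1 = u ∧
      B (σ (t + 1, u')) + (g (t + 1, (u', σ (t + 1, u')))).2 = σ (t, u) := by
    intro σ
    constructor
    · intro hsub t u ht
      obtain ⟨⟨t', u', s'⟩, ⟨-, hs⟩, hfe⟩ := hsub (show (t, u, σ (t, u)) ∈ _ from ⟨ht, rfl⟩)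
      simp only at hs
      rw [hf] at hfe
      simp only [Prod.mk.injEq] at hfe
      obtain ⟨h1, h2, h3⟩ := hfe
      obtain rfl : t' = t + 1 := by linarith
      subst hs
      exact ⟨u', h2, h3⟩
    · rintro H ⟨t, u, s⟩ ⟨ht, hs⟩
      simp only at ht hs
      obtain ⟨u', h1, h2⟩ := H t u ht
      refine ⟨(t + 1, u', σ (t + 1, u')), ⟨by simpa using ht, rfl⟩, ?_⟩
      rw [hf, h1, h2, hs, add_sub_cancel_right]
  have hnhds : ∀ t : ℝ, t₁ < t → ∀ᶠ s in nhds t, t₁ < s ∧ t - 1 ≤ s := fun t ht =>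
    (lt_mem_nhds ht).and (le_mem_nhds (by linarith))
  refine ⟨t₁, Ct / ((1 - θ) * (1 - kap)), umS hCρ R, hC0, ?_, ?_, ?_, ?_, ?_, ?_, ?_⟩
  · intro t u ht
    refine (umS_bound hCρ R (w := (t, u)) ht).trans ?_
    rw [div_mul_eq_mul_div]
    refine div_le_div_of_nonneg_left (mul_nonneg hCt (hρpos t).le) hden ?_
    nlinarith
  · intro t u u' ht
    have := hlip t (t, u) (t, u') ht ht (by simp) (by simp)
    simpa [Prod.norm_def] using this
  · refine Set.Subset.antisymm ?_ ?_
    · rintro _ ⟨⟨t, u, s⟩, ⟨ht, hs⟩, rfl⟩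
      simp only at ht hs
      subst hs
      rw [hf]
      exact ⟨by simp only; linarith, (umS_forward hCρ R ht u).symm⟩
    · exact (hinvar _).2 fun t u ht => umS_backward hCρ R ht u
  · intro C' σ' hC' hb _ hinv t u ht
    refine umS_unique hCρ R (K := C' * ρ t₁) σ' ?_ ((hinvar σ').1 hinv.ge) ht u
    intro t u ht
    exact (hb t u ht).trans (mul_le_mul_of_nonneg_left (hρanti ht.le) hC')
  · intro w hw
    exact (umS_contDiffAt hCρ R hw).contDiffWithinAt
  · intro t u ht
    rw [norm_deriv_eq_norm_fderiv]
    refine norm_fderiv_le_of_lip' ℝ (mul_nonneg hC0 (hρpos t).le) ?_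
    filter_upwards [hnhds t ht] with s hs
    have := hlip t (s, u) (t, u) hs.1 ht hs.2 (by simp)
    simpa [Prod.norm_def] using this
  · intro t u ht
    refine norm_fderiv_le_of_lip' ℝ (mul_nonneg hC0 (hρpos t).le) ?_
    filter_upwards with v
    have := hlip t (t, v) (t, u) ht ht (by simp) (by simp)
    simpa [Prod.norm_def] using this
end

section
/- Existence of the commutant for the quantitative propagation estimate: For all T₁ > 0, T₂ > 0 and δ₀ > 0 there exist infinitely differentiable functions ã₁, ã₂, b̃, ẽ: ℝ → ℝ such that, setting ã := ã₁² + ã₂²: (i) 0 ≤ ã ≤ 1 and the support of ã is contained in [−T₁, T₂+δ₀]; (ii) 0 ≤ ã₁ ≤ 1 and the support of ã₁ is contained in [−T₁, 0) (so ã₂² = ã on [0, T₂+δ₀]); (iii) the derivative identity ã'(x) = −b̃(x)² − (1/(4T₂))·ã₂(x)² + ẽ(x) holds for all x ∈ ℝ; (iv) b̃(x) ≥ 1/(2√T₂) for all x ∈ [0, T₂]; (v) ẽ ≥ 0, the support of ẽ is contained in [−T₁, 0], and ẽ ≤ 2/T₁ everywhere. -/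
lemma prim_exists (B : ℝ → ℝ) (hB : ContDiff ℝ (⊤ : ℕ∞) B) (h0 : ∀ x, 0 ≤ B x)
    (h1 : ∀ x, B x ≤ 1) (c : ℝ) :
    ∃ Φ : ℝ → ℝ, ContDiff ℝ (⊤ : ℕ∞) Φ ∧ (∀ x, HasDerivAt Φ (B x) x) ∧ Monotone Φ ∧ Φ c = 0 ∧
      (∀ u v d : ℝ, u ≤ v → (∀ x ∈ Set.Icc u v, B x = d) → Φ v - Φ u = d * (v - u)) ∧
      (∀ u v : ℝ, u ≤ v → Φ v - Φ u ≤ v - u) := by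
  have hc : Continuous B := hB.continuous
  have hi : ∀ u v, IntervalIntegrable B MeasureTheory.volume u v := fun u v =>
    hc.intervalIntegrable u v
  have hd : ∀ x, HasDerivAt (fun y => ∫ t in c..y, B t) (B x) x := fun x =>
    intervalIntegral.integral_hasDerivAt_right (hi c x)
      hc.stronglyMeasurable.stronglyMeasurableAtFilter hc.continuousAt
  have hsub : ∀ u v, (∫ t in c..v, B t) - (∫ t in c..u, B t) = ∫ t in u..v, B t := fun u v =>
    intervalIntegral.integral_interval_sub_left (hi c v) (hi c u)
  refine ⟨fun y => ∫ t in c..y, B t, ?_, hd, ?_, by simp, ?_, ?_⟩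
  · rw [contDiff_infty_iff_deriv]
    refine ⟨fun x => (hd x).differentiableAt, ?_⟩
    have : deriv (fun y => ∫ t in c..y, B t) = B := funext fun x => (hd x).deriv
    rw [this]; exact hB
  · apply monotone_of_deriv_nonneg (fun x => (hd x).differentiableAt)
    intro x; rw [(hd x).deriv]; exact h0 x
  · intro u v d huv h
    simp only [hsub]
    rw [intervalIntegral.integral_congr (g := fun _ => d)]
    · simp; ring
    · intro x hx
      rw [Set.uIcc_of_le huv] at hx
      exact h x hx
  · intro u v huv
    simp only [hsub]
    calc ∫ t in u..v, B t ≤ ∫ t in u..v, (1:ℝ) :=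
          intervalIntegral.integral_mono_on huv (hi u v) (by simp) (fun x _ => h1 x)
      _ = v - u := by simp

lemma glue_hasDerivAt (x : ℝ) :
    HasDerivAt expNegInvGlue (expNegInvGlue x * (x⁻¹) ^ 2) x := by
  have := expNegInvGlue.hasDerivAt_polynomial_eval_inv_mul 1 x
  simp at this
  rw [mul_comm]
  simpa using this

lemma glue_inv_contDiff : ContDiff ℝ (⊤ : ℕ∞) (fun x => x⁻¹ * expNegInvGlue x) := by
  have := expNegInvGlue.contDiff_polynomial_eval_inv_mul (n := (⊤ : ℕ∞)) Polynomial.X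
  simpa using this

lemma glue_le_one (x : ℝ) : expNegInvGlue x ≤ 1 := by
  unfold expNegInvGlue
  split_ifs with h
  · norm_num
  · push Not at h
    rw [Real.exp_le_one_iff]
    have := inv_pos.2 h
    linarith

lemma exp_num : (1:ℝ) / 2 ≤ 97 / 100 * Real.exp (-(65 / 100)) := by
  have h1 : Real.exp (65 / 100) ≤ 194 / 100 := by
    by_contra! h
    have h2 : (194 / 100 : ℝ) ^ 20 < Real.exp (65 / 100) ^ 20 := by gcongr
    rw [← Real.exp_nat_mul] at h2
    have h3 : Real.exp (((20 : ℕ) : ℝ) * (65 / 100)) = Real.exp 1 ^ 13 := by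
      rw [← Real.exp_nat_mul]; norm_num
    rw [h3] at h2
    have h4 : Real.exp 1 ^ 13 < (2.7182818286 : ℝ) ^ 13 := by
      gcongr; exact Real.exp_one_lt_d9
    norm_num at h2 h4
    linarith
  rw [Real.exp_neg]
  have hp := Real.exp_pos (65 / 100)
  rw [← div_eq_mul_inv, le_div_iff₀ hp]
  linarith

/-- Existence of the commutant for the quantitative propagation estimate:
smooth functions `ã = ã₁² + ã₂²`, `b̃`, `ẽ` with `0 ≤ ã ≤ 1`,
`supp ã ⊆ [−T₁, T₂+δ₀]`, `supp ã₁ ⊆ [−T₁, 0)` (so `ã₂² = ã` on `[0, T₂+δ₀]`),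
satisfying `ã' = −b̃² − (1/(4T₂))·ã₂² + ẽ`, with `b̃ ≥ 1/(2√T₂)` on `[0, T₂]`,
and `0 ≤ ẽ ≤ 2/T₁` supported in `[−T₁, 0]`. -/
theorem propagation_commutant_exists
    (T₁ T₂ δ₀ : ℝ) (hT₁ : 0 < T₁) (hT₂ : 0 < T₂) (hδ₀ : 0 < δ₀) :
    ∃ a₁ a₂ b e : ℝ → ℝ,
      ContDiff ℝ (⊤ : ℕ∞) a₁ ∧ ContDiff ℝ (⊤ : ℕ∞) a₂ ∧ ContDiff ℝ (⊤ : ℕ∞) b ∧ ContDiff ℝ (⊤ : ℕ∞) e ∧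
      (∀ x : ℝ, 0 ≤ a₁ x ^ 2 + a₂ x ^ 2 ∧ a₁ x ^ 2 + a₂ x ^ 2 ≤ 1) ∧
      Function.support (fun x : ℝ => a₁ x ^ 2 + a₂ x ^ 2) ⊆
        Set.Icc (-T₁) (T₂ + δ₀) ∧
      (∀ x : ℝ, 0 ≤ a₁ x ∧ a₁ x ≤ 1) ∧
      Function.support a₁ ⊆ Set.Ico (-T₁) 0 ∧
      (∀ x ∈ Set.Icc (0 : ℝ) (T₂ + δ₀), a₂ x ^ 2 = a₁ x ^ 2 + a₂ x ^ 2) ∧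
      (∀ x : ℝ, deriv (fun y : ℝ => a₁ y ^ 2 + a₂ y ^ 2) x =
        -(b x ^ 2) - (1 / (4 * T₂)) * a₂ x ^ 2 + e x) ∧
      (∀ x ∈ Set.Icc (0 : ℝ) T₂, 1 / (2 * Real.sqrt T₂) ≤ b x) ∧
      (∀ x : ℝ, 0 ≤ e x) ∧
      Function.support e ⊆ Set.Icc (-T₁) 0 ∧
      (∀ x : ℝ, e x ≤ 2 / T₁) := by
  obtain ⟨η, hη, hη1, hη2⟩ : ∃ η : ℝ, 0 < η ∧ η ≤ T₁ / 100 ∧ η ≤ T₂ / 100 :=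
    ⟨min (T₁ / 100) (T₂ / 100), by positivity, min_le_left _ _, min_le_right _ _⟩
  -- the rotation angle
  set S : ℝ → ℝ := Real.smoothTransition with hS
  have hSc : ContDiff ℝ (⊤ : ℕ∞) S := Real.smoothTransition.contDiff
  have hS0 : ∀ x, 0 ≤ S x := Real.smoothTransition.nonneg
  have hS1 : ∀ x, S x ≤ 1 := Real.smoothTransition.le_one
  have hSz : ∀ x, x ≤ 0 → S x = 0 := fun x => Real.smoothTransition.zero_of_nonpos
  have hSo : ∀ x, 1 ≤ x → S x = 1 := fun x => Real.smoothTransition.one_of_one_le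
  obtain ⟨θ, hθ⟩ : ∃ θ : ℝ → ℝ, θ = fun x => Real.pi / 2 * S ((x + η) / η) := ⟨_, rfl⟩
  have hθc : ContDiff ℝ (⊤ : ℕ∞) θ := by
    rw [hθ]
    exact contDiff_const.mul (hSc.comp ((contDiff_id.add contDiff_const).div_const η))
  have hθz : ∀ x, x ≤ -η → θ x = 0 := by
    intro x hx
    simp only [hθ]
    rw [hSz _ (div_nonpos_of_nonpos_of_nonneg (by linarith) hη.le), mul_zero]
  have hθo : ∀ x, 0 ≤ x → θ x = Real.pi / 2 := by
    intro x hx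
    simp only [hθ]
    rw [hSo _ (by rw [le_div_iff₀ hη]; linarith), mul_one]
  have hpi := Real.pi_pos
  have hcos0 : ∀ x, 0 ≤ Real.cos (θ x) := by
    intro x
    have a := hS0 ((x + η) / η)
    have b := hS1 ((x + η) / η)
    apply Real.cos_nonneg_of_neg_pi_div_two_le_of_le
    · simp only [hθ]; nlinarith
    · simp only [hθ]; nlinarith
  -- primitives
  obtain ⟨H, hHc, hHd, hHnn, hHle⟩ : ∃ H : ℝ → ℝ, ContDiff ℝ (⊤ : ℕ∞) H ∧
      (∀ x, HasDerivAt H (Real.sin (θ x) ^ 2) x) ∧ (∀ x, 0 ≤ H x) ∧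
      (∀ x, 0 ≤ x → H x ≤ x + η) := by
    obtain ⟨H, hHc, hHd, hHm, hH0, hHk, hHle⟩ := prim_exists (fun x => Real.sin (θ x) ^ 2)
      ((Real.contDiff_sin.comp hθc).pow 2) (fun x => sq_nonneg _)
      (fun x => Real.sin_sq_le_one _) (-η)
    refine ⟨H, hHc, hHd, ?_, ?_⟩
    · intro x
      rcases le_total x (-η) with h | h
      · have := hHk x (-η) 0 h (by intro y hy; simp [hθz y hy.2])
        linarith
      · have := hHm h
        linarith
    · intro x hx
      have := hHle (-η) x (by linarith)
      linarith
  -- the rising cutoff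
  obtain ⟨B, hB⟩ : ∃ B : ℝ → ℝ, B = fun x => S ((x + T₁) / η) * S ((-η - x) / η) := ⟨_, rfl⟩
  have hBc : ContDiff ℝ (⊤ : ℕ∞) B := by
    rw [hB]
    exact (hSc.comp ((contDiff_id.add contDiff_const).div_const η)).mul
      (hSc.comp ((contDiff_const.sub contDiff_id).div_const η))
  have hB0 : ∀ x, 0 ≤ B x := fun x => by simp only [hB]; exact mul_nonneg (hS0 _) (hS0 _)
  have hB1 : ∀ x, B x ≤ 1 := fun x => by
    simp only [hB]; exact mul_le_one₀ (hS1 _) (hS0 _) (hS1 _)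
  have hBl : ∀ x, x ≤ -T₁ → B x = 0 := by
    intro x hx
    simp only [hB]
    rw [hSz _ (div_nonpos_of_nonpos_of_nonneg (by linarith) hη.le), zero_mul]
  have hBr : ∀ x, -η ≤ x → B x = 0 := by
    intro x hx
    simp only [hB]
    rw [hSz ((-η - x) / η) (div_nonpos_of_nonpos_of_nonneg (by linarith) hη.le), mul_zero]
  have hBm : ∀ x ∈ Set.Icc (-T₁ + η) (-2 * η), B x = 1 := by
    intro x hx
    simp only [hB]
    rw [hSo _ (by rw [le_div_iff₀ hη]; linarith [hx.1]),
      hSo _ (by rw [le_div_iff₀ hη]; linarith [hx.2]), mul_one]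
  obtain ⟨ρ, k, hρc, hρd, hρ0, hρ1, hρl, hρr, hk0, hk⟩ : ∃ (ρ : ℝ → ℝ) (k : ℝ),
      ContDiff ℝ (⊤ : ℕ∞) ρ ∧ (∀ x, HasDerivAt ρ (k * B x) x) ∧ (∀ x, 0 ≤ ρ x) ∧
      (∀ x, ρ x ≤ 97 / 100) ∧ (∀ x, x ≤ -T₁ → ρ x = 0) ∧ (∀ x, 0 ≤ x → ρ x = 97 / 100) ∧
      0 ≤ k ∧ k * (97 / 100) ≤ 1 / T₁ := by
    obtain ⟨Φ, hc, hd, hm, h0, hconst, -⟩ := prim_exists B hBc hB0 hB1 (-T₁)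
    have hI : 97 / 100 * T₁ ≤ Φ 0 := by
      have e1 := hconst (-T₁ + η) (-2 * η) 1 (by linarith) hBm
      have e2 := hm (show -T₁ ≤ -T₁ + η by linarith)
      have e3 := hm (show -2 * η ≤ 0 by linarith)
      linarith
    have hIp : 0 < Φ 0 := lt_of_lt_of_le (by positivity) hI
    have hl : ∀ x, x ≤ -T₁ → Φ x = 0 := by
      intro x hx
      have := hconst x (-T₁) 0 hx (fun y hy => hBl y hy.2)
      linarith
    have hr : ∀ x, 0 ≤ x → Φ x = Φ 0 := by
      intro x hx
      have := hconst 0 x 0 hx (fun y hy => hBr y (by linarith [hy.1]))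
      linarith
    have hk0 : 0 ≤ 97 / 100 / Φ 0 := by positivity
    refine ⟨fun x => 97 / 100 / Φ 0 * Φ x, 97 / 100 / Φ 0, contDiff_const.mul hc,
      fun x => (hd x).const_mul _, ?_, ?_, ?_, ?_, hk0, ?_⟩
    · intro x
      refine mul_nonneg hk0 ?_
      rcases le_total x (-T₁) with h | h
      · rw [hl x h]
      · have := hm h
        linarith
    · intro x
      have h : Φ x ≤ Φ 0 := by
        rcases le_total x 0 with h | h
        · exact hm h
        · rw [hr x h]
      calc 97 / 100 / Φ 0 * Φ x ≤ 97 / 100 / Φ 0 * Φ 0 := by gcongr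
        _ = 97 / 100 := by field_simp
    · intro x hx
      simp only [hl x hx, mul_zero]
    · intro x hx
      simp only [hr x hx]
      field_simp
    · rw [div_mul_eq_mul_div, div_le_div_iff₀ hIp hT₁]
      linarith
  -- the exponential factor
  obtain ⟨σ, hσ⟩ : ∃ σ : ℝ → ℝ, σ = fun x => Real.exp (-(5 / (8 * T₂)) * H x) := ⟨_, rfl⟩
  have hσc : ContDiff ℝ (⊤ : ℕ∞) σ := by
    rw [hσ]; exact Real.contDiff_exp.comp (contDiff_const.mul hHc)
  have hσd : ∀ x, HasDerivAt σ (σ x * (-(5 / (8 * T₂)) * Real.sin (θ x) ^ 2)) x := by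
    intro x
    rw [hσ]
    exact ((hHd x).const_mul _).exp
  have hσ0 : ∀ x, 0 ≤ σ x := fun x => by simp only [hσ]; exact (Real.exp_pos _).le
  have hσ1 : ∀ x, σ x ≤ 1 := fun x => by
    simp only [hσ]
    rw [Real.exp_le_one_iff]
    have := mul_nonneg (show 0 ≤ 5 / (8 * T₂) by positivity) (hHnn x)
    linarith
  -- the final cutoff
  obtain ⟨κ, hκ⟩ : ∃ κ : ℝ, κ = δ₀ / 100 := ⟨_, rfl⟩
  have hκ0 : 0 < κ := by rw [hκ]; positivity
  obtain ⟨s, hs⟩ : ∃ s : ℝ → ℝ, s = fun x => (T₂ + δ₀ - x) / κ := ⟨_, rfl⟩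
  have hsc : ContDiff ℝ (⊤ : ℕ∞) s := by
    rw [hs]; exact (contDiff_const.sub contDiff_id).div_const κ
  have hsd : ∀ x, HasDerivAt s (-1 / κ) x := by
    intro x
    rw [hs]
    exact ((hasDerivAt_id x).const_sub (T₂ + δ₀)).div_const κ
  obtain ⟨χ, hχ⟩ : ∃ χ : ℝ → ℝ, χ = fun x => expNegInvGlue (s x) := ⟨_, rfl⟩
  have hχc : ContDiff ℝ (⊤ : ℕ∞) χ := by
    rw [hχ]; exact expNegInvGlue.contDiff.comp hsc
  have hχd : ∀ x, HasDerivAt χ (χ x * ((s x)⁻¹) ^ 2 * (-1 / κ)) x := by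
    intro x
    rw [hχ]
    exact (glue_hasDerivAt (s x)).comp x (hsd x)
  have hχ0 : ∀ x, 0 ≤ χ x := fun x => by simp only [hχ]; exact expNegInvGlue.nonneg _
  have hχ1 : ∀ x, χ x ≤ 1 := fun x => by simp only [hχ]; exact glue_le_one _
  have hχz : ∀ x, s x ≤ 0 → χ x = 0 := fun x h => by
    simp only [hχ]; exact expNegInvGlue.zero_of_nonpos h
  have hGc : ContDiff ℝ (⊤ : ℕ∞) (fun x => (s x)⁻¹ * χ x) := by
    rw [hχ]; exact glue_inv_contDiff.comp hsc
  -- the amplitude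
  obtain ⟨M, hM⟩ : ∃ M : ℝ → ℝ, M = fun x => ρ x * σ x * χ x := ⟨_, rfl⟩
  have hMc : ContDiff ℝ (⊤ : ℕ∞) M := by rw [hM]; exact (hρc.mul hσc).mul hχc
  have hM0 : ∀ x, 0 ≤ M x := fun x => by
    simp only [hM]; exact mul_nonneg (mul_nonneg (hρ0 x) (hσ0 x)) (hχ0 x)
  have hσχ1 : ∀ x, σ x * χ x ≤ 1 := fun x => mul_le_one₀ (hσ1 x) (hχ0 x) (hχ1 x)
  have hσχ0 : ∀ x, 0 ≤ σ x * χ x := fun x => mul_nonneg (hσ0 x) (hχ0 x)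
  have hM97 : ∀ x, M x ≤ 97 / 100 := fun x => by
    have h1 := mul_le_mul (hρ1 x) (hσχ1 x) (hσχ0 x) (by norm_num)
    simp only [hM]; linarith
  have hM1 : ∀ x, M x ≤ 1 := fun x => (hM97 x).trans (by norm_num)
  have hsqf : ∀ x, (M x * Real.cos (θ x)) ^ 2 + (M x * Real.sin (θ x)) ^ 2 = M x ^ 2 := by
    intro x
    have := Real.sin_sq_add_cos_sq (θ x)
    linear_combination M x ^ 2 * this
  have hw0 : ∀ x, 0 < Real.sin (θ x) ^ 2 * s x ^ 2 / T₂ + 2 / κ := fun x => by positivity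
  refine ⟨fun x => M x * Real.cos (θ x), fun x => M x * Real.sin (θ x),
    fun x => ρ x * σ x * ((s x)⁻¹ * χ x) *
      Real.sqrt (Real.sin (θ x) ^ 2 * s x ^ 2 / T₂ + 2 / κ),
    fun x => 2 * (k * B x) * ρ x * (σ x * χ x) ^ 2,
    hMc.mul (Real.contDiff_cos.comp hθc), hMc.mul (Real.contDiff_sin.comp hθc), ?_, ?_,
    ?_, ?_, ?_, ?_, ?_, ?_, ?_, ?_, ?_, ?_⟩
  · refine ((hρc.mul hσc).mul hGc).mul (ContDiff.sqrt ?_ (fun x => (hw0 x).ne'))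
    exact (((((Real.contDiff_sin.comp hθc).pow 2).mul (hsc.pow 2)).div_const T₂)).add
      contDiff_const
  · exact ((contDiff_const.mul (contDiff_const.mul hBc)).mul hρc).mul ((hσc.mul hχc).pow 2)
  · intro x
    simp only [hsqf]
    exact ⟨sq_nonneg _, pow_le_one₀ (hM0 x) (hM1 x)⟩
  · intro x hx
    simp only [hsqf, Function.mem_support] at hx
    by_contra hn
    apply hx
    rw [Set.mem_Icc, not_and_or] at hn
    rcases hn with h | h
    · simp [hM, hρl x (by linarith)]
    · have : s x ≤ 0 := by
        simp only [hs]
        exact div_nonpos_of_nonpos_of_nonneg (by linarith) hκ0.le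
      simp [hM, hχz x this]
  · intro x
    exact ⟨mul_nonneg (hM0 x) (hcos0 x), mul_le_one₀ (hM1 x) (hcos0 x) (Real.cos_le_one _)⟩
  · intro x hx
    rw [Function.mem_support] at hx
    by_contra hn
    apply hx
    rw [Set.mem_Ico, not_and_or] at hn
    rcases hn with h | h
    · simp [hM, hρl x (by linarith)]
    · simp [hθo x (by linarith)]
  · intro x hx
    simp [hθo x hx.1]
  · intro x
    simp only [hsqf]
    have hMd : HasDerivAt M ((k * B x * σ x +
        ρ x * (σ x * (-(5 / (8 * T₂)) * Real.sin (θ x) ^ 2))) * χ x +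
        ρ x * σ x * (χ x * ((s x)⁻¹) ^ 2 * (-1 / κ))) x := by
      rw [hM]
      exact ((hρd x).mul (hσd x)).mul (hχd x)
    have hd : HasDerivAt (fun y => M y ^ 2) _ x := hMd.pow 2
    rw [hd.deriv]
    rw [mul_pow _ (Real.sqrt _), Real.sq_sqrt (hw0 x).le]
    by_cases hsx : s x ≤ 0
    · simp [hM, hχz x hsx]
    · have hsx' : s x ≠ 0 := by intro h; exact hsx h.le
      simp only [hM]
      field_simp
      ring
  · intro x hx
    have hsx : 0 < s x := by
      simp only [hs]
      exact div_pos (by linarith [hx.2]) hκ0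
    have hst : 0 < Real.sqrt T₂ := Real.sqrt_pos.2 hT₂
    have h1 : s x / Real.sqrt T₂ ≤
        Real.sqrt (Real.sin (θ x) ^ 2 * s x ^ 2 / T₂ + 2 / κ) := by
      apply Real.le_sqrt_of_sq_le
      rw [hθo x hx.1, div_pow, Real.sq_sqrt hT₂.le, Real.sin_pi_div_two]
      have : 0 < 2 / κ := by positivity
      simp only [one_pow, one_mul]
      linarith
    have h2 : 1 / 2 ≤ ρ x * σ x * χ x := by
      rw [hρr x hx.1, mul_assoc]
      refine exp_num.trans ?_
      gcongr
      simp only [hσ, hχ]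
      rw [expNegInvGlue, if_neg (not_le.2 hsx), ← Real.exp_add]
      apply Real.exp_le_exp.2
      have h3 : (s x)⁻¹ ≤ 1 / 100 := by
        rw [inv_le_comm₀ hsx (by norm_num)]
        simp only [hs]
        rw [le_div_iff₀ hκ0, hκ]
        linarith [hx.2]
      have h4 : 5 / (8 * T₂) * H x ≤ 64 / 100 := by
        have := hHle x hx.1
        have h5 : H x ≤ 101 / 100 * T₂ := by linarith [hx.2]
        calc 5 / (8 * T₂) * H x ≤ 5 / (8 * T₂) * (101 / 100 * T₂) := by gcongr
          _ = 505 / 800 := by field_simp; norm_num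
          _ ≤ 64 / 100 := by norm_num
      linarith
    have hnn : 0 ≤ ρ x * σ x * ((s x)⁻¹ * χ x) :=
      mul_nonneg (mul_nonneg (hρ0 x) (hσ0 x)) (mul_nonneg (inv_pos.2 hsx).le (hχ0 x))
    calc 1 / (2 * Real.sqrt T₂) = (1 / 2) / Real.sqrt T₂ := by field_simp
      _ ≤ (ρ x * σ x * χ x) / Real.sqrt T₂ := by gcongr
      _ = ρ x * σ x * ((s x)⁻¹ * χ x) * (s x / Real.sqrt T₂) := by field_simp
      _ ≤ _ := mul_le_mul_of_nonneg_left h1 hnn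
  · intro x
    exact mul_nonneg (mul_nonneg (mul_nonneg (by norm_num) (mul_nonneg hk0 (hB0 x))) (hρ0 x))
      (sq_nonneg _)
  · intro x hx
    rw [Function.mem_support] at hx
    by_contra hn
    apply hx
    rw [Set.mem_Icc, not_and_or] at hn
    rcases hn with h | h
    · simp [hρl x (by linarith)]
    · simp [hBr x (by linarith)]
  · intro x
    have h1 : (σ x * χ x) ^ 2 ≤ 1 := pow_le_one₀ (hσχ0 x) (hσχ1 x)
    have hb := hB1 x
    have hr := hρ1 x
    have hb0 := hB0 x
    have hr0 := hρ0 x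
    calc 2 * (k * B x) * ρ x * (σ x * χ x) ^ 2 ≤ 2 * (k * 1) * (97 / 100) * 1 := by gcongr
      _ = 2 * (k * (97 / 100)) := by ring
      _ ≤ 2 * (1 / T₁) := by linarith
      _ = 2 / T₁ := by ring
end

section
/- Existence of the localizer ψ for propagation along the unstable direction: For every ε₀ > 0 there exists δ₀ ∈ (0, ε₀/3) such that for every δ ∈ (0, δ₀] there exist infinitely differentiable functions ψ, ψ₋, ψ₊, b̃, ẽ: ℝ → ℝ with the following properties: (i) 0 ≤ ψ ≤ 1 and the support of ψ is contained in [−4δ, 2ε₀]; (ii) ψ' ≥ 0 on (−∞, 0], ψ(−3δ) ≥ 1/4, ψ'(x) ≥ 1/(12δ) for x ∈ [−3δ, 3δ], and ψ'(x) ≥ −1/ε₀ for x ∈ [0,∞); (iii) ψ(x) ≤ 12δ·ψ'(x) for x ∈ [−4δ, 3δ]; (iv) ψ² = ψ₋² + ψ₊², with ψ₋ = ψ on (−∞, 3δ], the support of ψ₋ contained in [−4δ, 4δ], 0 ≤ ψ₊ ≤ 1, and the support of ψ₊ contained in (3δ, 2ε₀]; (v) ψ·ψ' = (1/(24δ))·ψ₋²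 + (1/(24δ))·b̃² − ẽ, where b̃ ≥ 0, the support of b̃ is contained in [−4δ, 4δ], b̃(x) ≥ 1/4 for x ∈ [−3δ, 3δ], the support of ẽ is contained in (3δ, 2ε₀], and |ẽ| ≤ 1/ε₀ everywhere. -/
open Set Filter Topology MeasureTheory in
/-- The rising profile on the left, in the rescaled variable. -/
lemma aux_profile : ∃ P P' B : ℝ → ℝ, ContDiff ℝ (⊤ : ℕ∞) P ∧ (∀ s, HasDerivAt P (P' s) s) ∧
    (∀ s, s ≤ 0 → P s = 0) ∧ (∀ s, s ≤ 0 → B s = 0) ∧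
    (∀ s, s ≤ 8 → 0 ≤ P s ∧ P s ≤ 1 ∧ 0 ≤ P' s ∧ P s ≤ 12 * P' s) ∧
    (∀ s, 1 ≤ s → s ≤ 7 → 1 / 12 ≤ P' s ∧ 1 / 4 ≤ P s) ∧
    (∀ s, s ≤ 8 → ContDiffAt ℝ (⊤ : ℕ∞) B s) ∧ (∀ s, 0 ≤ B s) ∧
    (∀ s, s ≤ 8 → B s ^ 2 = 24 * P s * P' s - P s ^ 2) := by
  set E : ℝ → ℝ := fun s => expNegInvGlue (4 * s) with hE
  have hE0 : ∀ s, s ≤ 0 → E s = 0 := fun s hs => expNegInvGlue.zero_of_nonpos (by linarith)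
  have hEn : ∀ s, 0 ≤ E s := fun s => expNegInvGlue.nonneg _
  have hEle : ∀ s, E s ≤ 1 := by
    intro s
    simp only [hE, expNegInvGlue]
    split_ifs with h
    · norm_num
    · apply Real.exp_le_one_iff.2
      push Not at h
      have := inv_pos.2 h
      linarith
  have hElow : ∀ s, 0 < s → 1 - (4 * s)⁻¹ ≤ E s := by
    intro s hs
    simp only [hE, expNegInvGlue]
    rw [if_neg (by linarith)]
    have := Real.add_one_le_exp (-(4 * s)⁻¹)
    linarith
  have hEd : ∀ s, HasDerivAt E (4 * ((4 * s)⁻¹) ^ 2 * E s) s := by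
    intro s
    have h1 : HasDerivAt expNegInvGlue (((4 * s)⁻¹) ^ 2 * expNegInvGlue (4 * s)) (4 * s) := by
      have h := expNegInvGlue.hasDerivAt_polynomial_eval_inv_mul 1 (4 * s)
      simp only [Polynomial.eval_one, one_mul, Polynomial.derivative_one, sub_zero, mul_one,
        Polynomial.eval_pow, Polynomial.eval_X] at h
      exact h
    have h2 : HasDerivAt (fun s : ℝ => 4 * s) 4 s := by
      simpa using (hasDerivAt_id s).const_mul (4 : ℝ)
    exact (h1.comp s h2).congr_deriv (by simp only [hE]; ring)
  have hEc : ContDiff ℝ (⊤ : ℕ∞) E :=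
    expNegInvGlue.contDiff.comp (contDiff_const.mul contDiff_id)
  have hHc : ContDiff ℝ (⊤ : ℕ∞) (fun s => (4 * s)⁻¹ * E s) := by
    have h1 := (expNegInvGlue.contDiff_polynomial_eval_inv_mul (n := ⊤) Polynomial.X).comp
      (contDiff_const.mul contDiff_id : ContDiff ℝ (⊤ : ℕ∞) (fun s : ℝ => 4 * s))
    simpa [Function.comp_def] using h1
  set Q : ℝ → ℝ := fun s => (s + 4) * (8 / 3 * s ^ 2 + 2 / 3 * (s + 4) - (s + 4) * s ^ 2 / 9) with hQ
  have hQp : ∀ s, -1 < s → s ≤ 8 → 0 < Q s := by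
    intro s h1 h2
    have h : 0 < 8 / 3 * s ^ 2 + 2 / 3 * (s + 4) - (s + 4) * s ^ 2 / 9 := by
      nlinarith [mul_nonneg (sq_nonneg s) (sub_nonneg.2 h2)]
    exact mul_pos (by linarith) h
  refine ⟨fun s => (s + 4) / 12 * E s,
    fun s => 1 / 12 * E s + (s + 4) / 12 * (4 * ((4 * s)⁻¹) ^ 2 * E s),
    fun s => (4 * s)⁻¹ * E s * √(Q s), ?_, ?_, ?_, ?_, ?_, ?_, ?_, ?_, ?_⟩
  · exact ((contDiff_id.add contDiff_const).div_const _).mul hEc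
  · intro s
    have := (((hasDerivAt_id s).add_const (4 : ℝ)).div_const 12).mul (hEd s)
    exact this
  · intro s hs; simp [hE0 s hs]
  · intro s hs; simp [hE0 s hs]
  · intro s hs
    rcases le_or_gt s 0 with h0 | h0
    · simp [hE0 s h0]
    have hn := hEn s
    have hl := hEle s
    have hz : 0 ≤ (s + 4) / 12 * (4 * ((4 * s)⁻¹) ^ 2 * E s) := by positivity
    refine ⟨by positivity, ?_, by positivity, ?_⟩
    · nlinarith
    · nlinarith
  · intro s h1 h7
    have hs : 0 < s := by linarith
    have hl := hElow s hs
    set x := (4 * s)⁻¹ with hx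
    have hxs : x * s = 1 / 4 := by rw [hx]; field_simp
    have hx0 : 0 < x := by positivity
    have hx4 : x ≤ 1 / 4 := by nlinarith
    constructor
    · have e1 : (1 / 12 * E s + (s + 4) / 12 * (4 * x ^ 2 * E s)) =
          1 / 12 * (1 + x + 16 * x ^ 2) * E s := by
        linear_combination (1 / 3 * x * E s) * hxs
      show 1 / 12 ≤ (1 / 12 * E s + (s + 4) / 12 * (4 * x ^ 2 * E s))
      rw [e1]
      have : 1 ≤ (1 + x + 16 * x ^ 2) * (1 - x) := by nlinarith [sq_nonneg x]
      have := mul_le_mul_of_nonneg_left hl (by positivity : 0 ≤ 1 + x + 16 * x ^ 2)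
      linarith
    · have : 3 / 4 ≤ E s := by linarith
      show 1 / 4 ≤ (s + 4) / 12 * E s
      nlinarith
  · intro s hs
    rcases lt_or_ge (-1) s with h1 | h1
    · refine hHc.contDiffAt.mul (ContDiffAt.sqrt ?_ (hQp s h1 hs).ne')
      apply ContDiff.contDiffAt
      simp only [hQ]
      fun_prop
    · apply (contDiffAt_const (c := (0 : ℝ))).congr_of_eventuallyEq
      filter_upwards [Iio_mem_nhds (show s < 0 by linarith)] with t ht
      simp [hE0 t (le_of_lt ht)]
  · intro s
    rcases le_or_gt s 0 with h0 | h0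
    · simp [hE0 s h0]
    · have := hEn s
      positivity
  · intro s hs
    rcases le_or_gt s 0 with h0 | h0
    · simp [hE0 s h0]
    · rw [mul_pow, Real.sq_sqrt (hQp s (by linarith) hs).le]
      simp only [hQ]
      field_simp
      ring

lemma aux_contDiff_int (f F : ℝ → ℝ) (hf : ContDiff ℝ (⊤ : ℕ∞) f)
    (hF : ∀ x, HasDerivAt F (f x) x) : ContDiff ℝ (⊤ : ℕ∞) F := by
  apply contDiff_infty_iff_deriv.2
  refine ⟨fun x => (hF x).differentiableAt, ?_⟩
  have : deriv F = f := funext fun x => (hF x).deriv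
  rw [this]; exact hf

/-- The flattened variable, whose derivative is the square of v. -/
lemma aux_flat : ∃ U v w : ℝ → ℝ, ContDiff ℝ (⊤ : ℕ∞) U ∧ ContDiff ℝ (⊤ : ℕ∞) v ∧
    ContDiff ℝ (⊤ : ℕ∞) w ∧ (∀ s, HasDerivAt U (v s ^ 2) s) ∧ (∀ s, v s ^ 2 + w s ^ 2 = 1) ∧
    (∀ s, 0 ≤ v s) ∧ (∀ s, 0 ≤ w s) ∧ (∀ s, s ≤ 7 → v s = 1 ∧ w s = 0 ∧ U s = s) ∧
    (∀ s, 8 ≤ s → v s = 0) ∧ (∀ s, U s ≤ 8) := by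
  set θ : ℝ → ℝ := fun s => Real.pi / 2 * Real.smoothTransition (s - 7) with hθ
  have hθc : ContDiff ℝ (⊤ : ℕ∞) θ :=
    contDiff_const.mul (Real.smoothTransition.contDiff.comp (contDiff_id.sub contDiff_const))
  have hpi := Real.pi_pos
  have hθ0 : ∀ s, 0 ≤ θ s := fun s =>
    mul_nonneg (by positivity) (Real.smoothTransition.nonneg _)
  have hθ1 : ∀ s, θ s ≤ Real.pi / 2 := fun s =>
    mul_le_of_le_one_right (by positivity) (Real.smoothTransition.le_one _)
  have hθ7 : ∀ s, s ≤ 7 → θ s = 0 := fun s hs => by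
    simp [hθ, Real.smoothTransition.zero_of_nonpos (show s - 7 ≤ 0 by linarith)]
  have hθ8 : ∀ s, 8 ≤ s → θ s = Real.pi / 2 := fun s hs => by
    simp [hθ, Real.smoothTransition.one_of_one_le (show 1 ≤ s - 7 by linarith)]
  set v : ℝ → ℝ := fun s => Real.cos (θ s) with hv
  have hvc : ContDiff ℝ (⊤ : ℕ∞) v := Real.contDiff_cos.comp hθc
  have hv8 : ∀ s, 8 ≤ s → v s = 0 := fun s hs => by simp [hv, hθ8 s hs]
  have hv7 : ∀ s, s ≤ 7 → v s = 1 := fun s hs => by simp [hv, hθ7 s hs]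
  have hv2c : Continuous (fun s => v s ^ 2) := (hvc.continuous).pow 2
  set U : ℝ → ℝ := fun s => 7 + ∫ t in (7 : ℝ)..s, v t ^ 2 with hU
  have hUd : ∀ s, HasDerivAt U (v s ^ 2) s := fun s =>
    ((hv2c.integral_hasStrictDerivAt 7 s).hasDerivAt).const_add 7
  have hUmono : Monotone U := monotone_of_deriv_nonneg (fun s => (hUd s).differentiableAt)
    (fun s => by rw [(hUd s).deriv]; positivity)
  have hle : ∀ s, 7 ≤ s → U s ≤ s := by
    intro s hs
    have : ∫ t in (7 : ℝ)..s, v t ^ 2 ≤ ∫ t in (7 : ℝ)..s, (1 : ℝ) := by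
      apply intervalIntegral.integral_mono_on hs (hv2c.intervalIntegrable _ _)
        (continuous_const.intervalIntegrable _ _)
      intro x _
      exact Real.cos_sq_le_one _
    simp at this
    simp only [hU]
    linarith
  refine ⟨U, v, fun s => Real.sin (θ s), aux_contDiff_int _ _ (hvc.pow 2) hUd, hvc,
    Real.contDiff_sin.comp hθc, hUd, fun s => Real.cos_sq_add_sin_sq _, ?_, ?_, ?_, hv8, ?_⟩
  · intro s
    exact Real.cos_nonneg_of_neg_pi_div_two_le_of_le (by linarith [hθ0 s]) (hθ1 s)
  · intro s
    exact Real.sin_nonneg_of_nonneg_of_le_pi (hθ0 s) (by linarith [hθ1 s])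
  · intro s hs
    refine ⟨hv7 s hs, by simp [hθ7 s hs], ?_⟩
    have : ∫ t in (7 : ℝ)..s, v t ^ 2 = ∫ t in (7 : ℝ)..s, (1 : ℝ) := by
      apply intervalIntegral.integral_congr
      intro t ht
      rw [Set.uIcc_of_ge hs] at ht
      simp [hv7 t ht.2]
    simp only [hU, this]
    simp
  · intro s
    rcases le_total s 8 with h | h
    · exact (hUmono h).trans (hle 8 (by norm_num))
    · have : ∫ t in (8 : ℝ)..s, v t ^ 2 = ∫ t in (8 : ℝ)..s, (0 : ℝ) := by
        apply intervalIntegral.integral_congr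
        intro t ht
        rw [Set.uIcc_of_le h] at ht
        simp [hv8 t ht.1]
      have h2 := intervalIntegral.integral_add_adjacent_intervals
        (hv2c.intervalIntegrable (μ := MeasureTheory.volume) 7 8)
        (hv2c.intervalIntegrable (μ := MeasureTheory.volume) 8 s)
      have h3 := hle 8 (by norm_num)
      simp only [hU] at h3 ⊢
      rw [← h2, this]
      simpa using h3

/-- The slow cutoff. -/
lemma aux_cutoff (ε δ : ℝ) (hδ : 0 < δ) (h : δ ≤ ε / 100) : ∃ G g : ℝ → ℝ,
    ContDiff ℝ (⊤ : ℕ∞) G ∧ ContDiff ℝ (⊤ : ℕ∞) g ∧ (∀ x, HasDerivAt G (-g x) x) ∧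
    (∀ x, 0 ≤ g x ∧ g x ≤ 1 / ε) ∧ (∀ x, g x ≠ 0 → 4 * δ < x ∧ x < 2 * ε) ∧
    (∀ x, 0 ≤ G x ∧ G x ≤ 1) ∧ (∀ x, x ≤ 4 * δ → G x = 1) ∧ (∀ x, 2 * ε ≤ x → G x = 0) := by
  let f : ContDiffBump (ε + 2 * δ) := ⟨ε / 2, ε - 2 * δ, by linarith, by linarith⟩
  set g : ℝ → ℝ := f.normed MeasureTheory.volume with hg
  have hgc : ContDiff ℝ (⊤ : ℕ∞) g := f.contDiff_normed
  have hg0 : ∀ x, 0 ≤ g x := fun x => f.nonneg_normed x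
  have hg1 : ∀ x, g x ≤ 1 / ε := by
    intro x
    have := f.normed_le_div_measure_closedBall_rIn (μ := MeasureTheory.volume) x
    have e : MeasureTheory.volume.real (Metric.closedBall (ε + 2 * δ) f.rIn) = ε := by
      show MeasureTheory.volume.real (Metric.closedBall (ε + 2 * δ) (ε / 2)) = ε
      rw [Real.volume_real_closedBall (by linarith)]
      ring
    rwa [e] at this
  have hgs : ∀ x, g x ≠ 0 → 4 * δ < x ∧ x < 2 * ε := by
    intro x hx
    have hm : x ∈ Function.support g := hx
    rw [hg, f.support_normed_eq, Real.ball_eq_Ioo] at hm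
    have h1 : ε + 2 * δ - (ε - 2 * δ) < x := hm.1
    have h2 : x < ε + 2 * δ + (ε - 2 * δ) := hm.2
    constructor <;> linarith
  set G : ℝ → ℝ := fun x => 1 - ∫ t in (4 * δ)..x, g t with hG
  have hGd : ∀ x, HasDerivAt G (-g x) x := fun x =>
    ((hgc.continuous.integral_hasStrictDerivAt (4 * δ) x).hasDerivAt).const_sub 1
  have hGanti : Antitone G := antitone_of_deriv_nonpos (fun s => (hGd s).differentiableAt)
    (fun s => by rw [(hGd s).deriv]; linarith [hg0 s])
  have hGl : ∀ x, x ≤ 4 * δ → G x = 1 := by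
    intro x hx
    have : ∫ t in (4 * δ)..x, g t = ∫ t in (4 * δ)..x, (0 : ℝ) := by
      apply intervalIntegral.integral_congr
      intro t ht
      rw [Set.uIcc_of_ge hx] at ht
      by_contra hne
      have := (hgs t hne).1
      linarith [ht.2]
    simp only [hG, this]
    simp
  have hGr : ∀ x, 2 * ε ≤ x → G x = 0 := by
    intro x hx
    have : ∫ t in (4 * δ)..x, g t = ∫ t, g t := by
      apply intervalIntegral.integral_eq_integral_of_support_subset
      intro t ht
      have := hgs t ht
      exact ⟨this.1, by linarith⟩
    have h1 : ∫ t, g t = 1 := f.integral_normed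
    show 1 - ∫ t in (4 * δ)..x, g t = 0
    rw [this, h1, sub_self]
  refine ⟨G, g, aux_contDiff_int _ _ hgc.neg hGd, hgc, hGd, fun x => ⟨hg0 x, hg1 x⟩, hgs, ?_,
    hGl, hGr⟩
  intro x
  constructor
  · rw [← hGr (max x (2 * ε)) (le_max_right _ _)]
    exact hGanti (le_max_left _ _)
  · rw [← hGl (min x (4 * δ)) (min_le_right _ _)]
    exact hGanti (min_le_left _ _)

/-- Existence of the localizer `ψ` for propagation along the unstable
direction: for every `ε₀ > 0` there is `δ₀ ∈ (0, ε₀/3)` such that for every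
`δ ∈ (0, δ₀]` there are smooth `ψ, ψ₋, ψ₊, b̃, ẽ` with the support, monotonicity,
size, splitting `ψ² = ψ₋² + ψ₊²`, and commutator-decomposition
`ψψ' = (1/(24δ))ψ₋² + (1/(24δ))b̃² − ẽ` properties. -/
theorem unstable_localizer_exists (ε₀ : ℝ) (hε₀ : 0 < ε₀) :
    ∃ δ₀ : ℝ, 0 < δ₀ ∧ δ₀ < ε₀ / 3 ∧
      ∀ δ : ℝ, 0 < δ → δ ≤ δ₀ →
        ∃ ψ ψm ψp b e : ℝ → ℝ,
          ContDiff ℝ (⊤ : ℕ∞) ψ ∧ ContDiff ℝ (⊤ : ℕ∞) ψm ∧ ContDiff ℝ (⊤ : ℕ∞) ψp ∧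
          ContDiff ℝ (⊤ : ℕ∞) b ∧ ContDiff ℝ (⊤ : ℕ∞) e ∧
          (∀ x : ℝ, 0 ≤ ψ x ∧ ψ x ≤ 1) ∧
          Function.support ψ ⊆ Set.Icc (-(4 * δ)) (2 * ε₀) ∧
          (∀ x : ℝ, x ≤ 0 → 0 ≤ deriv ψ x) ∧
          1 / 4 ≤ ψ (-(3 * δ)) ∧
          (∀ x ∈ Set.Icc (-(3 * δ)) (3 * δ), 1 / (12 * δ) ≤ deriv ψ x) ∧
          (∀ x : ℝ, 0 ≤ x → -(1 / ε₀) ≤ deriv ψ x) ∧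
          (∀ x ∈ Set.Icc (-(4 * δ)) (3 * δ), ψ x ≤ 12 * δ * deriv ψ x) ∧
          (∀ x : ℝ, ψ x ^ 2 = ψm x ^ 2 + ψp x ^ 2) ∧
          (∀ x : ℝ, x ≤ 3 * δ → ψm x = ψ x) ∧
          Function.support ψm ⊆ Set.Icc (-(4 * δ)) (4 * δ) ∧
          (∀ x : ℝ, 0 ≤ ψp x ∧ ψp x ≤ 1) ∧
          Function.support ψp ⊆ Set.Ioc (3 * δ) (2 * ε₀) ∧
          (∀ x : ℝ, ψ x * deriv ψ x =
            (1 / (24 * δ)) * ψm x ^ 2 + (1 / (24 * δ)) * b x ^ 2 - e x) ∧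
          (∀ x : ℝ, 0 ≤ b x) ∧
          Function.support b ⊆ Set.Icc (-(4 * δ)) (4 * δ) ∧
          (∀ x ∈ Set.Icc (-(3 * δ)) (3 * δ), 1 / 4 ≤ b x) ∧
          Function.support e ⊆ Set.Ioc (3 * δ) (2 * ε₀) ∧
          (∀ x : ℝ, |e x| ≤ 1 / ε₀) := by
  obtain ⟨P, P', B, hPc, hPd, hP0, hB0, hP, hP17, hBc, hBn, hB2⟩ := aux_profile
  obtain ⟨U, v, w, hUc, hvc, hwc, hUd, hvw, hvn, hwn, h7, h8, hU8⟩ := aux_flat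
  refine ⟨ε₀ / 100, by positivity, by linarith, ?_⟩
  intro δ hδ hδ0
  obtain ⟨G, g, hGc, hgc, hGd, hg, hgs, hG, hGl, hGr⟩ := aux_cutoff ε₀ δ hδ hδ0
  set S : ℝ → ℝ := fun x => x / δ + 4 with hS
  have hSc : ContDiff ℝ (⊤ : ℕ∞) S := (contDiff_id.div_const _).add contDiff_const
  have hSd : ∀ x, HasDerivAt S (1 / δ) x := fun x =>
    ((hasDerivAt_id x).div_const δ).add_const 4
  have hSle : ∀ x c, S x ≤ c ↔ x ≤ (c - 4) * δ := by
    intro x c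
    rw [← div_le_iff₀ hδ]
    simp only [hS]
    constructor <;> intro h <;> linarith
  have hSge : ∀ x c, c ≤ S x ↔ (c - 4) * δ ≤ x := by
    intro x c
    rw [← le_div_iff₀ hδ]
    simp only [hS]
    constructor <;> intro h <;> linarith
  set F : ℝ → ℝ := fun x => P (U (S x)) with hF
  set F' : ℝ → ℝ := fun x => P' (U (S x)) * (v (S x) ^ 2 * (1 / δ)) with hF'
  have hFc : ContDiff ℝ (⊤ : ℕ∞) F := hPc.comp (hUc.comp hSc)
  have hFd : ∀ x, HasDerivAt F (F' x) x := fun x =>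
    (hPd _).comp x ((hUd _).comp x (hSd x))
  have hF01 : ∀ x, 0 ≤ F x ∧ F x ≤ 1 := fun x =>
    ⟨(hP _ (hU8 _)).1, (hP _ (hU8 _)).2.1⟩
  have hF'n : ∀ x, 0 ≤ F' x := fun x => by
    have := (hP _ (hU8 (S x))).2.2.1
    simp only [hF']
    positivity
  have hFz : ∀ x, x ≤ -(4 * δ) → F x = 0 := fun x hx => by
    have h0 : S x ≤ 0 := (hSle x 0).2 (by linarith)
    simp only [hF]
    rw [(h7 (S x) (by linarith)).2.2]
    exact hP0 _ h0
  have hvG : ∀ x, v (S x) * G x = v (S x) := fun x => by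
    rcases le_total x (4 * δ) with h | h
    · rw [hGl x h, mul_one]
    · rw [h8 (S x) ((hSge x 8).2 (by linarith)), zero_mul]
  have hψd : ∀ x, HasDerivAt (fun x => F x * G x) (F' x * G x + F x * (-g x)) x := fun x =>
    (hFd x).mul (hGd x)
  have hderiv : ∀ x, deriv (fun x => F x * G x) x = F' x * G x + F x * (-g x) := fun x =>
    (hψd x).deriv
  have hgl : ∀ x, x ≤ 4 * δ → g x = 0 := fun x hx => by
    by_contra hne
    linarith [(hgs x hne).1]
  have hderivl : ∀ x, x ≤ 4 * δ → deriv (fun x => F x * G x) x = F' x := fun x hx => by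
    rw [hderiv, hgl x hx, hGl x hx]; ring
  have hFl : ∀ x, x ≤ 3 * δ → F x = P (S x) ∧ F' x = P' (S x) * (1 / δ) := fun x hx => by
    have h := h7 (S x) ((hSle x 7).2 (by linarith))
    simp only [hF, hF', h.1, h.2.2]
    simp
  have hψ01 : ∀ x, 0 ≤ F x * G x ∧ F x * G x ≤ 1 := fun x =>
    ⟨mul_nonneg (hF01 x).1 (hG x).1, mul_le_one₀ (hF01 x).2 (hG x).1 (hG x).2⟩
  have hw1 : ∀ s, w s ≤ 1 := fun s => by nlinarith [hvw s, sq_nonneg (v s), hwn s]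
  refine ⟨fun x => F x * G x, fun x => F x * G x * v (S x), fun x => F x * G x * w (S x),
    fun x => v (S x) * B (U (S x)), fun x => F x ^ 2 * G x * g x,
    hFc.mul hGc, (hFc.mul hGc).mul (hvc.comp hSc), (hFc.mul hGc).mul (hwc.comp hSc), ?_,
    ((hFc.pow 2).mul hGc).mul hgc, hψ01, ?_, ?_, ?_, ?_, ?_, ?_, ?_, ?_, ?_, ?_, ?_, ?_, ?_, ?_,
    ?_, ?_, ?_⟩
  · apply (hvc.comp hSc).mul
    rw [contDiff_iff_contDiffAt]
    intro x
    exact (hBc _ (hU8 (S x))).comp x (hUc.comp hSc).contDiffAt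
  · intro x hx
    rw [Function.mem_support] at hx
    constructor
    · by_contra hne
      push Not at hne
      exact hx (by rw [hFz x hne.le, zero_mul])
    · by_contra hne
      push Not at hne
      exact hx (by rw [hGr x hne.le, mul_zero])
  · intro x hx
    rw [hderivl x (by linarith)]
    exact hF'n x
  · show 1 / 4 ≤ F (-(3 * δ)) * G (-(3 * δ))
    rw [hGl _ (by linarith), mul_one, (hFl _ (by linarith)).1]
    exact (hP17 _ ((hSge _ 1).2 (by linarith)) ((hSle _ 7).2 (by linarith))).2
  · intro x hx
    rw [hderivl x (by linarith [hx.2]), (hFl x hx.2).2]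
    have := (hP17 (S x) ((hSge _ 1).2 (by linarith [hx.1])) ((hSle _ 7).2 (by linarith [hx.2]))).1
    have h2 := mul_le_mul_of_nonneg_right this (by positivity : 0 ≤ 1 / δ)
    calc 1 / (12 * δ) = 1 / 12 * (1 / δ) := by field_simp
      _ ≤ _ := h2
  · intro x _
    rw [hderiv]
    have h1 := mul_nonneg (hF'n x) (hG x).1
    have h2 : F x * g x ≤ 1 * (1 / ε₀) :=
      mul_le_mul (hF01 x).2 (hg x).2 (hg x).1 (by norm_num)
    linarith
  · intro x hx
    rw [hderivl x (by linarith [hx.2]), (hFl x hx.2).2]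
    show F x * G x ≤ _
    rw [hGl _ (by linarith [hx.2]), mul_one, (hFl x hx.2).1]
    have h := (hP (S x) ((hSle x 8).2 (by linarith [hx.2]))).2.2.2
    calc P (S x) ≤ 12 * P' (S x) := h
      _ = _ := by field_simp
  · intro x
    linear_combination (-(F x * G x) ^ 2) * hvw (S x)
  · intro x hx
    show F x * G x * v (S x) = F x * G x
    rw [(h7 (S x) ((hSle x 7).2 (by linarith))).1, mul_one]
  · intro x hx
    rw [Function.mem_support] at hx
    constructor
    · by_contra hne
      push Not at hne
      exact hx (by rw [hFz x hne.le]; ring)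
    · by_contra hne
      push Not at hne
      exact hx (by rw [h8 (S x) ((hSge x 8).2 (by linarith))]; ring)
  · intro x
    exact ⟨mul_nonneg (hψ01 x).1 (hwn _), mul_le_one₀ (hψ01 x).2 (hwn _) (hw1 _)⟩
  · intro x hx
    rw [Function.mem_support] at hx
    constructor
    · by_contra hne
      push Not at hne
      exact hx (by rw [(h7 (S x) ((hSle x 7).2 (by linarith))).2.1]; ring)
    · by_contra hne
      push Not at hne
      exact hx (by rw [hGr x hne.le]; ring)
  · intro x
    rw [hderiv]
    show F x * G x * (F' x * G x + F x * (-g x)) = 1 / (24 * δ) * (F x * G x * v (S x)) ^ 2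
      + 1 / (24 * δ) * (v (S x) * B (U (S x))) ^ 2 - F x ^ 2 * G x * g x
    have hb := hB2 _ (hU8 (S x))
    have e1 : F x * G x * v (S x) = F x * v (S x) := by
      rw [mul_assoc, mul_comm (G x), hvG]
    have e2 : F x * G x * (F' x * G x) = F x * F' x := by
      have : F x * G x * (F' x * G x) =
        F x * P' (U (S x)) * (1 / δ) * (v (S x) * G x) ^ 2 := by simp only [hF']; ring
      rw [this, hvG]; simp only [hF']; ring
    rw [e1, mul_pow (v (S x)), hb, mul_add, e2]
    simp only [hF, hF']
    field_simp
    ring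
  · intro x
    exact mul_nonneg (hvn _) (hBn _)
  · intro x hx
    rw [Function.mem_support] at hx
    constructor
    · by_contra hne
      push Not at hne
      have h0 : S x ≤ 0 := (hSle x 0).2 (by linarith)
      exact hx (by rw [(h7 (S x) (by linarith)).2.2, hB0 _ h0]; ring)
    · by_contra hne
      push Not at hne
      exact hx (by rw [h8 (S x) ((hSge x 8).2 (by linarith))]; ring)
  · intro x hx
    have s1 := (hSge x 1).2 (by linarith [hx.1])
    have s7 := (hSle x 7).2 (by linarith [hx.2])
    show 1 / 4 ≤ v (S x) * B (U (S x))
    rw [(h7 _ s7).1, (h7 _ s7).2.2, one_mul]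
    have hp := (hP17 _ s1 s7).2
    have hp2 := (hP (S x) (by linarith)).2.2.2
    have hb := hB2 (S x) (by linarith)
    have hle : P (S x) ≤ B (S x) := by
      refine abs_le_of_sq_le_sq' ?_ (hBn _) |>.2
      nlinarith
    linarith
  · intro x hx
    rw [Function.mem_support] at hx
    have hne : g x ≠ 0 := fun h => hx (by rw [h, mul_zero])
    have := hgs x hne
    exact ⟨by linarith, by linarith⟩
  · intro x
    have h1 : F x ^ 2 * G x ≤ 1 :=
      mul_le_one₀ (pow_le_one₀ (hF01 x).1 (hF01 x).2) (hG x).1 (hG x).2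
    have h0 : 0 ≤ F x ^ 2 * G x := mul_nonneg (sq_nonneg _) (hG x).1
    show |F x ^ 2 * G x * g x| ≤ 1 / ε₀
    rw [abs_of_nonneg (mul_nonneg h0 (hg x).1)]
    have := mul_le_mul h1 (hg x).2 (hg x).1 (by norm_num)
    linarith
end

section
/- Existence of the localizer ψ for logarithmically long propagation along the unstable manifold: For every ε₀ > 0 and every δ ∈ (0, ε₀/3), setting T_δ := log(6ε₀/δ), there exist infinitely differentiable functions ψ, b̃, ẽ: ℝ → ℝ such that: (i) 0 ≤ ψ ≤ 1 and the support of ψ is contained in the open interval (0, T_δ); (ii) ψ'(x) ≤ 1 for x ∈ [0, log(9/4)]; (iii) ψ'(x) < 0 and ψ(x) ≥ 1/4 for x ∈ [log(9/4), log(5ε₀/δ)]; (iv) ψ·ψ' = −b̃² + ẽ on ℝ, where b̃ ≥ 0 with support contained in [log(3/2), T_δ), the support of ẽ is contained in [0, log(9/4)), and |ẽ| ≤ 1 everywhere. -/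
open MeasureTheory in
lemma exists_rise (L : ℝ) (hL : 0 < L) (hL1 : 2 * L ≤ 1) :
    ∃ h β : ℝ → ℝ, ContDiff ℝ (⊤ : ℕ∞) h ∧ (∀ x, HasDerivAt h (β x) x) ∧
      ContDiff ℝ (⊤ : ℕ∞) β ∧
      (∀ x, 0 ≤ β x ∧ β x ≤ 1) ∧ (∀ x, 2 * L ≤ x → β x = 0) ∧
      (∀ x, 0 ≤ h x ∧ h x ≤ 1) ∧ (∀ x, x ≤ 0 → h x = 0) ∧
      (∀ x, 2 * L ≤ x → L ≤ h x) := by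
  let B : ContDiffBump L := ⟨L / 2, L, by linarith, by linarith⟩
  have hBc : ContDiff ℝ (⊤ : ℕ∞) (B : ℝ → ℝ) := B.contDiff
  have hcont : Continuous (B : ℝ → ℝ) := hBc.continuous
  have hi : ∀ a b, IntervalIntegrable (B : ℝ → ℝ) volume a b :=
    fun a b => hcont.intervalIntegrable a b
  have h0l : ∀ x, x ≤ 0 → B x = 0 := fun x hx => B.zero_of_le_dist (by
    rw [Real.dist_eq, abs_of_nonpos (by linarith)]; show L ≤ _; linarith)
  have h0r : ∀ x, 2 * L ≤ x → B x = 0 := fun x hx => B.zero_of_le_dist (by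
    rw [Real.dist_eq, abs_of_nonneg (by linarith)]; show L ≤ _; linarith)
  have h1 : ∀ x, L / 2 ≤ x → x ≤ 3 * L / 2 → B x = 1 := fun x hx hx' =>
    B.one_of_mem_closedBall (by
      rw [Metric.mem_closedBall, Real.dist_eq, abs_le]
      show -(L / 2) ≤ _ ∧ _ ≤ L / 2
      constructor <;> linarith)
  let h : ℝ → ℝ := fun x => ∫ t in (0 : ℝ)..x, B t
  have hd : ∀ x, HasDerivAt h (B x) x := fun x =>
    intervalIntegral.integral_hasDerivAt_right (hi _ _)
      (hcont.stronglyMeasurableAtFilter _ _) hcont.continuousAt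
  have hadd : ∀ x y, h y = h x + ∫ t in x..y, B t := fun x y =>
    (intervalIntegral.integral_add_adjacent_intervals (hi _ _) (hi _ _)).symm
  have hmono : ∀ x y, x ≤ y → h x ≤ h y := fun x y hxy => by
    rw [hadd x y]
    have := intervalIntegral.integral_nonneg (μ := volume) hxy (fun t _ => B.nonneg (x := t))
    linarith
  have hz : ∀ x, x ≤ 0 → h x = 0 := fun x hx => by
    have : h x = ∫ t in (0 : ℝ)..x, (0 : ℝ) := by
      apply intervalIntegral.integral_congr
      intro t ht
      rw [Set.uIcc_of_ge hx] at ht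
      exact h0l t ht.2
    simpa using this
  have hr : ∀ x, 2 * L ≤ x → h x = h (2 * L) := fun x hx => by
    have : ∫ t in (2 * L)..x, B t = ∫ t in (2 * L)..x, (0 : ℝ) := by
      apply intervalIntegral.integral_congr
      intro t ht
      rw [Set.uIcc_of_le hx] at ht
      exact h0r t ht.1
    rw [hadd (2 * L) x, this]; simp
  have hle : h (2 * L) ≤ 1 := by
    have : h (2 * L) ≤ ∫ t in (0 : ℝ)..(2 * L), (1 : ℝ) :=
      intervalIntegral.integral_mono_on (by linarith) (hi _ _) (by simp)
        (fun t _ => B.le_one)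
    simp at this
    linarith
  have hge : L ≤ h (2 * L) := by
    have e1 : ∫ t in (L / 2)..(3 * L / 2), B t = ∫ t in (L / 2)..(3 * L / 2), (1 : ℝ) := by
      apply intervalIntegral.integral_congr
      intro t ht
      rw [Set.uIcc_of_le (by linarith)] at ht
      exact h1 t ht.1 ht.2
    have e2 := hadd (L / 2) (3 * L / 2)
    rw [e1] at e2
    simp at e2
    have := hmono 0 (L / 2) (by linarith)
    have := hmono (3 * L / 2) (2 * L) (by linarith)
    have := hz 0 le_rfl
    linarith
  refine ⟨h, B, ?_, hd, hBc, fun x => ⟨B.nonneg, B.le_one⟩, h0r, fun x => ⟨?_, ?_⟩, hz,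
    fun x hx => by rw [hr x hx]; exact hge⟩
  · rw [contDiff_infty_iff_deriv]
    refine ⟨fun x => (hd x).differentiableAt, ?_⟩
    have : deriv h = B := funext fun x => (hd x).deriv
    rw [this]; exact hBc
  · rcases le_total x 0 with hx | hx
    · rw [hz x hx]
    · have := hmono 0 x hx
      rw [hz 0 le_rfl] at this; exact this
  · rcases le_total x (2 * L) with hx | hx
    · exact (hmono _ _ hx).trans hle
    · rw [hr x hx]; exact hle

/-- The decaying factor. -/
lemma exists_decay (T a : ℝ) (ha : 0 < a) :
    ∃ g c : ℝ → ℝ, ContDiff ℝ (⊤ : ℕ∞) g ∧ ContDiff ℝ (⊤ : ℕ∞) c ∧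
      (∀ x, HasDerivAt g (-(c x * (c x / g x))) x ∨ T ≤ x ∧ HasDerivAt g 0 x) ∧
      (∀ x, 0 ≤ g x ∧ g x ≤ 1) ∧ (∀ x, 0 ≤ c x) ∧
      (∀ x, T ≤ x → g x = 0) ∧ (∀ x, T ≤ x → c x = 0) ∧
      (∀ x, x < T → g x = Real.exp (-(a / (T - x)))) ∧
      (∀ x, x < T → c x ^ 2 = a / (T - x) ^ 2 * g x ^ 2) := by
  let k := expNegInvGlue
  have hk : ContDiff ℝ (⊤ : ℕ∞) (fun x : ℝ => x⁻¹ * expNegInvGlue x) := by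
    simpa using expNegInvGlue.contDiff_polynomial_eval_inv_mul (n := (⊤ : ℕ∞)) Polynomial.X
  have hkd : ∀ y : ℝ, HasDerivAt expNegInvGlue (y⁻¹ ^ 2 * expNegInvGlue y) y := fun y => by
    simpa using expNegInvGlue.hasDerivAt_polynomial_eval_inv_mul 1 y
  have hgle : ∀ y : ℝ, expNegInvGlue y ≤ 1 := fun y => by
    unfold expNegInvGlue
    split_ifs with hy
    · exact zero_le_one
    · rw [Real.exp_le_one_iff]
      have : 0 < y⁻¹ := by push Not at hy; positivity
      linarith
  have hpos : ∀ x, x < T → 0 < (T - x) / a := fun x hx => div_pos (by linarith) ha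
  have hneg : ∀ x, T ≤ x → (T - x) / a ≤ 0 := fun x hx =>
    div_nonpos_of_nonpos_of_nonneg (by linarith) ha.le
  have hsq : √a ^ 2 = a := Real.sq_sqrt ha.le
  have hsq0 : 0 < √a := Real.sqrt_pos.2 ha
  have hD : ∀ x, HasDerivAt (fun x => expNegInvGlue ((T - x) / a))
      (((T - x) / a)⁻¹ ^ 2 * expNegInvGlue ((T - x) / a) * (-1 / a)) x := fun x =>
    (hkd _).comp x (((hasDerivAt_id x).const_sub T).div_const a)
  refine ⟨fun x => expNegInvGlue ((T - x) / a),
    fun x => (√a)⁻¹ * (((T - x) / a)⁻¹ * expNegInvGlue ((T - x) / a)), ?_, ?_, ?_, ?_, ?_, ?_, ?_,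
    ?_, ?_⟩
  · exact expNegInvGlue.contDiff.comp (by fun_prop)
  · exact contDiff_const.mul (hk.comp (f := fun x => (T - x) / a) (by fun_prop))
  · intro x
    rcases lt_or_ge x T with hx | hx
    · left
      have h1 := expNegInvGlue.pos_of_pos (hpos x hx)
      convert hD x using 1
      have hx' : T - x ≠ 0 := by linarith
      field_simp
      rw [hsq]
    · right
      refine ⟨hx, ?_⟩
      have := hD x
      rwa [expNegInvGlue.zero_of_nonpos (hneg x hx), mul_zero, zero_mul] at this
  · exact fun x => ⟨expNegInvGlue.nonneg _, hgle _⟩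
  · intro x
    rcases lt_or_ge x T with hx | hx
    · have h1 := expNegInvGlue.pos_of_pos (hpos x hx)
      have := hpos x hx
      positivity
    · simp [expNegInvGlue.zero_of_nonpos (hneg x hx)]
  · exact fun x hx => expNegInvGlue.zero_of_nonpos (hneg x hx)
  · intro x hx
    simp [expNegInvGlue.zero_of_nonpos (hneg x hx)]
  · intro x hx
    simp only [expNegInvGlue, if_neg (not_le.2 (hpos x hx)), inv_div]
  · intro x hx
    have hx' : T - x ≠ 0 := by linarith
    simp only [mul_pow, inv_pow, hsq]
    field_simp


/-- Existence of the localizer `ψ` for logarithmically long propagation along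
the unstable manifold: for `0 < δ < ε₀/3` and `T_δ = log(6ε₀/δ)` there are
smooth `ψ, b̃, ẽ` with `0 ≤ ψ ≤ 1`, `supp ψ ⊆ (0, T_δ)`, `ψ' ≤ 1` on
`[0, log(9/4)]`, `ψ' < 0` and `ψ ≥ 1/4` on `[log(9/4), log(5ε₀/δ)]`, and
`ψψ' = −b̃² + ẽ` with `b̃ ≥ 0` supported in `[log(3/2), T_δ)`, `ẽ` supported in
`[0, log(9/4))`, `|ẽ| ≤ 1`. -/
theorem log_localizer_exists
    (ε₀ δ : ℝ) (hε₀ : 0 < ε₀) (hδ : 0 < δ) (hδε : δ < ε₀ / 3) :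
    ∃ ψ b e : ℝ → ℝ,
      ContDiff ℝ (⊤ : ℕ∞) ψ ∧ ContDiff ℝ (⊤ : ℕ∞) b ∧ ContDiff ℝ (⊤ : ℕ∞) e ∧
      (∀ x : ℝ, 0 ≤ ψ x ∧ ψ x ≤ 1) ∧
      Function.support ψ ⊆ Set.Ioo 0 (Real.log (6 * ε₀ / δ)) ∧
      (∀ x ∈ Set.Icc (0 : ℝ) (Real.log (9 / 4)), deriv ψ x ≤ 1) ∧
      (∀ x ∈ Set.Icc (Real.log (9 / 4)) (Real.log (5 * ε₀ / δ)),
        deriv ψ x < 0 ∧ 1 / 4 ≤ ψ x) ∧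
      (∀ x : ℝ, ψ x * deriv ψ x = -(b x ^ 2) + e x) ∧
      (∀ x : ℝ, 0 ≤ b x) ∧
      Function.support b ⊆ Set.Ico (Real.log (3 / 2)) (Real.log (6 * ε₀ / δ)) ∧
      Function.support e ⊆ Set.Ico 0 (Real.log (9 / 4)) ∧
      (∀ x : ℝ, |e x| ≤ 1) := by

  set T := Real.log (6 * ε₀ / δ) with hT
  set A := Real.log (5 * ε₀ / δ) with hA
  set L := Real.log (3 / 2) with hLd
  have hL2 : Real.log (9 / 4) = 2 * L := by
    rw [hLd, show (9 / 4 : ℝ) = (3 / 2) ^ 2 by norm_num, Real.log_pow]; norm_num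
  have hL3 : 1 / 3 ≤ L := by
    have := Real.one_sub_inv_le_log_of_pos (show (0 : ℝ) < 3 / 2 by norm_num)
    norm_num at this ⊢; linarith
  have he := Real.exp_one_gt_d9
  have hL1 : 2 * L ≤ 1 := by
    rw [← hL2, Real.log_le_iff_le_exp (by norm_num)]; linarith
  have hTA : T = A + Real.log (6 / 5) := by
    rw [hT, hA, ← Real.log_mul (by positivity) (by norm_num)]
    congr 1; field_simp
  have hl0 : 0 < Real.log (6 / 5) := Real.log_pos (by norm_num)
  have hl1 : Real.log (6 / 5) ≤ 1 := by
    have := Real.log_le_sub_one_of_pos (show (0 : ℝ) < 6 / 5 by norm_num); linarith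
  have hTL : 2 * L + 1 ≤ T := by
    have h1 : (1 : ℝ) ≤ Real.log 8 := by
      rw [Real.le_log_iff_exp_le (by norm_num)]
      have := Real.exp_one_lt_d9; linarith
    have h2 : Real.log (9 / 4) + Real.log 8 ≤ T := by
      rw [← Real.log_mul (by norm_num) (by norm_num), hT]
      apply Real.log_le_log (by norm_num)
      rw [le_div_iff₀ hδ]; linarith
    linarith
  rw [hL2]
  clear_value T A L
  set l := Real.log (6 / 5)
  clear_value l
  obtain ⟨h, β, hc, hd, hβc, hβ, hβ0, h01, hz, hge⟩ := exists_rise L (by linarith) hL1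
  obtain ⟨g, c, gc, cc, gd, g01, c0, gz, cz, gexp, csq⟩ := exists_decay T (l / 10) (by linarith)
  have gpos : ∀ x, x < T → 0 < g x := fun x hx => by rw [gexp x hx]; exact Real.exp_pos _
  -- derivative of g
  have gd' : ∀ x, ∃ g', HasDerivAt g g' x ∧ g' ≤ 0 ∧ g x * g' = -(c x ^ 2) ∧
      (x < T → g' < 0) := by
    intro x
    rcases lt_or_ge x T with hx | hx
    · have hg := gpos x hx
      have hcp : 0 < c x ^ 2 := by
        rw [csq x hx]
        have : 0 < T - x := by linarith
        positivity
      rcases gd x with h1 | h1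
      · refine ⟨_, h1, ?_, ?_, fun _ => ?_⟩
        · have := c0 x
          have : 0 ≤ c x * (c x / g x) := by positivity
          linarith
        · field_simp
        · have : 0 < c x ^ 2 / g x := by positivity
          have e : c x * (c x / g x) = c x ^ 2 / g x := by ring
          rw [e]; linarith
      · linarith [h1.1]
    · refine ⟨0, ?_, le_rfl, by simp [cz x hx], fun h => by linarith⟩
      rcases gd x with h1 | h1
      · simpa [cz x hx] using h1
      · exact h1.2
  choose g' hg' hg'0 hg'c hg'lt using gd'
  have hψd : ∀ x, deriv (fun x => h x * g x) x = β x * g x + h x * g' x := fun x =>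
    ((hd x).mul (hg' x)).deriv
  let χ : ℝ → ℝ := fun x => Real.smoothTransition ((x - L) / L)
  have hL0 : 0 < L := by linarith
  have χc : ContDiff ℝ (⊤ : ℕ∞) χ := Real.smoothTransition.contDiff.comp (by fun_prop)
  have χ0 : ∀ x, 0 ≤ χ x := fun x => Real.smoothTransition.nonneg _
  have χ1 : ∀ x, χ x ≤ 1 := fun x => Real.smoothTransition.le_one _
  have χz : ∀ x, x ≤ L → χ x = 0 := fun x hx => Real.smoothTransition.zero_of_nonpos
    (div_nonpos_of_nonpos_of_nonneg (by linarith) hL0.le)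
  have χo : ∀ x, 2 * L ≤ x → χ x = 1 := fun x hx => Real.smoothTransition.one_of_one_le
    (by rw [le_div_iff₀ hL0]; linarith)
  clear_value χ
  have ez : ∀ x, 2 * L ≤ x →
      h x * β x * g x ^ 2 - h x ^ 2 * c x ^ 2 * (1 - χ x ^ 2) = 0 := fun x hx => by
    rw [hβ0 x hx, χo x hx]; ring
  refine ⟨fun x => h x * g x, fun x => h x * c x * χ x,
    fun x => h x * β x * g x ^ 2 - h x ^ 2 * c x ^ 2 * (1 - χ x ^ 2),
    hc.mul gc, (hc.mul cc).mul χc, ?_, ?_, ?_, ?_, ?_, ?_, ?_, ?_, ?_, ?_⟩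
  · fun_prop
  · intro x
    exact ⟨mul_nonneg (h01 x).1 (g01 x).1, mul_le_one₀ (h01 x).2 (g01 x).1 (g01 x).2⟩
  · intro x hx
    rw [Function.mem_support] at hx
    constructor
    · by_contra hc; exact hx (by simp [hz x (not_lt.1 hc)])
    · by_contra hc; exact hx (by simp [gz x (not_lt.1 hc)])
  · intro x _
    rw [hψd]
    have h1 : β x * g x ≤ 1 := mul_le_one₀ (hβ x).2 (g01 x).1 (g01 x).2
    have h2 := mul_nonpos_of_nonneg_of_nonpos (h01 x).1 (hg'0 x)
    linarith
  · intro x hx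
    have hxT : x < T := by linarith [hx.2]
    have hh := hge x hx.1
    constructor
    · rw [hψd, hβ0 x hx.1]
      have := mul_neg_of_pos_of_neg (show 0 < h x by linarith) (hg'lt x hxT)
      linarith
    · have : 9 / 10 ≤ g x := by
        rw [gexp x hxT]
        have h1 : l / 10 / (T - x) ≤ 1 / 10 := by
          rw [div_le_iff₀ (by linarith)]; linarith [hx.2]
        have := Real.add_one_le_exp (-(l / 10 / (T - x)))
        linarith
      show 1 / 4 ≤ h x * g x
      nlinarith
  · intro x
    rw [hψd]
    linear_combination h x ^ 2 * hg'c x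
  · intro x
    exact mul_nonneg (mul_nonneg (h01 x).1 (c0 x)) (χ0 x)
  · intro x hx
    rw [Function.mem_support] at hx
    constructor
    · by_contra hc; exact hx (by simp [χz x (not_le.1 hc).le])
    · by_contra hc; exact hx (by simp [cz x (not_lt.1 hc)])
  · intro x hx
    rw [Function.mem_support] at hx
    constructor
    · by_contra hc; exact hx (by simp [hz x (not_le.1 hc).le])
    · by_contra hc; exact hx (ez x (not_lt.1 hc))
  · intro x
    rcases lt_or_ge x (2 * L) with hx | hx
    · have hxT : 1 ≤ T - x := by linarith
      have hg2 : g x ^ 2 ≤ 1 := pow_le_one₀ (g01 x).1 (g01 x).2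
      have hh2 : h x ^ 2 ≤ 1 := pow_le_one₀ (h01 x).1 (h01 x).2
      have hχ2 : χ x ^ 2 ≤ 1 := pow_le_one₀ (χ0 x) (χ1 x)
      have hc2 : c x ^ 2 ≤ 1 := by
        rw [csq x (by linarith)]
        refine mul_le_one₀ ?_ (sq_nonneg _) hg2
        rw [div_le_one (by positivity)]
        nlinarith
      have p1 : h x * β x * g x ^ 2 ≤ 1 :=
        mul_le_one₀ (mul_le_one₀ (h01 x).2 (hβ x).1 (hβ x).2) (sq_nonneg _) hg2
      have p0 : 0 ≤ h x * β x * g x ^ 2 :=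
        mul_nonneg (mul_nonneg (h01 x).1 (hβ x).1) (sq_nonneg _)
      have q0 : 0 ≤ h x ^ 2 * c x ^ 2 * (1 - χ x ^ 2) :=
        mul_nonneg (by positivity) (by linarith)
      have q1 : h x ^ 2 * c x ^ 2 * (1 - χ x ^ 2) ≤ 1 :=
        mul_le_one₀ (mul_le_one₀ hh2 (sq_nonneg _) hc2) (by linarith) (by nlinarith [χ0 x])
      rw [abs_le]
      constructor <;> linarith
    · show |h x * β x * g x ^ 2 - h x ^ 2 * c x ^ 2 * (1 - χ x ^ 2)| ≤ 1
      rw [ez x hx]; simp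
end

section
/- Existence of monotone cutoffs with smooth square root of −χχ': For all real numbers 0 ≤ a < b there exist infinitely differentiable functions χ, β: ℝ → ℝ such that: (i) 0 ≤ χ ≤ 1; (ii) χ(x) = 1 for x ≤ a and χ(x) = 0 for x ≥ b; (iii) χ'(x) ≤ 0 for all x; (iv) β ≥ 0 and β(x)² = −χ(x)·χ'(x) for all x ∈ ℝ. -/
/-- `p x = x⁻¹ exp(-1/x)` glued with zero: it is smooth. -/
theorem aux_p_contDiff : ContDiff ℝ (⊤ : ℕ∞) (fun x : ℝ => x⁻¹ * expNegInvGlue x) := by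
  simpa using expNegInvGlue.contDiff_polynomial_eval_inv_mul (n := ⊤) Polynomial.X

theorem aux_p_nonneg (x : ℝ) : 0 ≤ x⁻¹ * expNegInvGlue x := by
  rcases le_or_gt x 0 with h | h
  · simp [expNegInvGlue.zero_of_nonpos h]
  · exact mul_nonneg (inv_pos.2 h).le (expNegInvGlue.nonneg x)

theorem aux_p_mul (x : ℝ) : expNegInvGlue x = x * (x⁻¹ * expNegInvGlue x) := by
  rcases eq_or_ne x 0 with h | h
  · simp [h]
  · field_simp

theorem aux_deriv (x : ℝ) :
    HasDerivAt (fun x => expNegInvGlue x ^ 2) (2 * (x⁻¹ * expNegInvGlue x) ^ 2) x := by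
  have h : HasDerivAt expNegInvGlue (x⁻¹ ^ 2 * expNegInvGlue x) x := by
    simpa using expNegInvGlue.hasDerivAt_polynomial_eval_inv_mul 1 x
  refine (h.fun_pow 2).congr_deriv ?_
  push_cast
  ring

theorem aux_unit : ∃ χ χ' β : ℝ → ℝ,
      ContDiff ℝ (⊤ : ℕ∞) χ ∧ ContDiff ℝ (⊤ : ℕ∞) β ∧
      (∀ x : ℝ, 0 ≤ χ x ∧ χ x ≤ 1) ∧
      (∀ x : ℝ, x ≤ 0 → χ x = 1) ∧
      (∀ x : ℝ, 1 ≤ x → χ x = 0) ∧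
      (∀ x : ℝ, HasDerivAt χ (χ' x) x) ∧
      (∀ x : ℝ, χ' x ≤ 0) ∧
      (∀ x : ℝ, 0 ≤ β x) ∧
      (∀ x : ℝ, β x ^ 2 = -(χ x * χ' x)) := by
  have hD : ∀ x : ℝ, 0 < expNegInvGlue (1 - x) ^ 2 + expNegInvGlue x ^ 2 := by
    intro x
    rcases lt_or_ge 0 x with h | h
    · have := expNegInvGlue.pos_of_pos h
      positivity
    · have := expNegInvGlue.pos_of_pos (show 0 < 1 - x by linarith)
      positivity
  have hS : ∀ x : ℝ, 0 < 2 * (x ^ 2 + (1 - x) ^ 2) := by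
    intro x
    nlinarith [sq_nonneg (2 * x - 1)]
  have hE : ContDiff ℝ (⊤ : ℕ∞) expNegInvGlue := expNegInvGlue.contDiff
  have hs : ContDiff ℝ (⊤ : ℕ∞) (fun x : ℝ => 1 - x) := contDiff_const.sub contDiff_id
  have hE1 : ContDiff ℝ (⊤ : ℕ∞) (fun x : ℝ => expNegInvGlue (1 - x)) := hE.comp hs
  have hDc : ContDiff ℝ (⊤ : ℕ∞)
      (fun x : ℝ => expNegInvGlue (1 - x) ^ 2 + expNegInvGlue x ^ 2) :=
    (hE1.pow 2).add (hE.pow 2)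
  have hSc : ContDiff ℝ (⊤ : ℕ∞) (fun x : ℝ => 2 * (x ^ 2 + (1 - x) ^ 2)) :=
    contDiff_const.mul ((contDiff_id.pow 2).add (hs.pow 2))
  refine ⟨fun x => expNegInvGlue (1 - x) ^ 2 / (expNegInvGlue (1 - x) ^ 2 + expNegInvGlue x ^ 2),
    fun x => -(((x⁻¹ * expNegInvGlue x) ^ 2 * ((1 - x)⁻¹ * expNegInvGlue (1 - x)) ^ 2 *
      (2 * (x ^ 2 + (1 - x) ^ 2))) / (expNegInvGlue (1 - x) ^ 2 + expNegInvGlue x ^ 2) ^ 2),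
    fun x => (x⁻¹ * expNegInvGlue x) * ((1 - x)⁻¹ * expNegInvGlue (1 - x)) *
      expNegInvGlue (1 - x) * √(2 * (x ^ 2 + (1 - x) ^ 2)) /
      √(expNegInvGlue (1 - x) ^ 2 + expNegInvGlue x ^ 2) ^ 3, ?_, ?_, ?_, ?_, ?_, ?_, ?_, ?_, ?_⟩
  · exact (hE1.pow 2).div hDc fun x => (hD x).ne'
  · refine ContDiff.div ?_ ((hDc.sqrt fun x => (hD x).ne').pow 3) fun x =>
      pow_ne_zero _ (Real.sqrt_pos.2 (hD x)).ne'
    exact ((aux_p_contDiff.mul (aux_p_contDiff.comp hs)).mul hE1).mul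
      (hSc.sqrt fun x => (hS x).ne')
  · intro x
    refine ⟨div_nonneg (sq_nonneg _) (hD x).le, (div_le_one (hD x)).2 ?_⟩
    linarith [sq_nonneg (expNegInvGlue x)]
  · intro x hx
    have h := hD x
    simp only [expNegInvGlue.zero_of_nonpos hx] at h ⊢
    rw [div_eq_one_iff_eq h.ne']
    simp
  · intro x hx
    simp [expNegInvGlue.zero_of_nonpos (show 1 - x ≤ 0 by linarith)]
  · intro x
    have h1 := aux_deriv x
    have h2 := (aux_deriv (1 - x)).comp x ((hasDerivAt_id x).const_sub 1)
    have h2' : HasDerivAt (fun x => expNegInvGlue (1 - x) ^ 2)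
      (2 * ((1 - x)⁻¹ * expNegInvGlue (1 - x)) ^ 2 * -1) x := h2
    refine (h2'.fun_div (h2'.fun_add h1) (hD x).ne').congr_deriv ?_
    beta_reduce
    rw [← neg_div]
    congr 1
    have e1 := aux_p_mul x
    have e2 := aux_p_mul (1 - x)
    generalize x⁻¹ * expNegInvGlue x = p at *
    generalize (1 - x)⁻¹ * expNegInvGlue (1 - x) = q at *
    rw [e1, e2]
    ring
  · intro x
    have := hD x
    have := hS x
    exact neg_nonpos.2 (by positivity)
  · intro x
    have h1 := aux_p_nonneg x
    have h2 := aux_p_nonneg (1 - x)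
    have h3 := expNegInvGlue.nonneg (1 - x)
    exact div_nonneg (mul_nonneg (mul_nonneg (mul_nonneg h1 h2) h3) (Real.sqrt_nonneg _))
      (pow_nonneg (Real.sqrt_nonneg _) _)
  · intro x
    have hd := hD x
    have e : (√(expNegInvGlue (1 - x) ^ 2 + expNegInvGlue x ^ 2) ^ 3) ^ 2 =
        (expNegInvGlue (1 - x) ^ 2 + expNegInvGlue x ^ 2) ^ 3 := by
      rw [← pow_mul, mul_comm, pow_mul, Real.sq_sqrt hd.le]
    dsimp only
    rw [div_pow, e, mul_pow _ (√_), Real.sq_sqrt (hS x).le]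
    generalize x⁻¹ * expNegInvGlue x = p at *
    generalize (1 - x)⁻¹ * expNegInvGlue (1 - x) = q at *
    generalize expNegInvGlue (1 - x) ^ 2 + expNegInvGlue x ^ 2 = D at *
    field_simp

/-- Existence of monotone cutoffs with a smooth square root of `−χχ'`: for
`0 ≤ a < b` there are smooth `χ, β` with `0 ≤ χ ≤ 1`, `χ = 1` on `(−∞, a]`,
`χ = 0` on `[b, ∞)`, `χ' ≤ 0`, `β ≥ 0`, and `β² = −χ·χ'`. -/
theorem monotone_cutoff_smooth_sqrt (a b : ℝ) (ha : 0 ≤ a) (hab : a < b) :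
    ∃ χ β : ℝ → ℝ,
      ContDiff ℝ (⊤ : ℕ∞) χ ∧ ContDiff ℝ (⊤ : ℕ∞) β ∧
      (∀ x : ℝ, 0 ≤ χ x ∧ χ x ≤ 1) ∧
      (∀ x : ℝ, x ≤ a → χ x = 1) ∧
      (∀ x : ℝ, b ≤ x → χ x = 0) ∧
      (∀ x : ℝ, deriv χ x ≤ 0) ∧
      (∀ x : ℝ, 0 ≤ β x) ∧
      (∀ x : ℝ, β x ^ 2 = -(χ x * deriv χ x)) := by
  obtain ⟨f, f', g, hf, hg, h01, h1, h0, hd, hneg, hgn, hsq⟩ := aux_unit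
  have hba : 0 < b - a := sub_pos.2 hab
  have hl : ContDiff ℝ (⊤ : ℕ∞) (fun x : ℝ => (x - a) / (b - a)) :=
    (contDiff_id.sub contDiff_const).div_const _
  have hder : ∀ x, deriv (fun x => f ((x - a) / (b - a))) x =
      f' ((x - a) / (b - a)) * (1 / (b - a)) := by
    intro x
    have h : HasDerivAt (fun x : ℝ => (x - a) / (b - a)) (1 / (b - a)) x :=
      ((hasDerivAt_id x).sub_const a).div_const (b - a)
    exact ((hd ((x - a) / (b - a))).comp x h).deriv
  refine ⟨fun x => f ((x - a) / (b - a)), fun x => √(1 / (b - a)) * g ((x - a) / (b - a)),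
    hf.comp hl, contDiff_const.mul (hg.comp hl), fun x => h01 _, fun x hx => h1 _ ?_,
    fun x hx => h0 _ ?_, fun x => ?_, fun x => mul_nonneg (Real.sqrt_nonneg _) (hgn _),
    fun x => ?_⟩
  · exact div_nonpos_of_nonpos_of_nonneg (by linarith) hba.le
  · rw [le_div_iff₀ hba]
    linarith
  · rw [hder]
    exact mul_nonpos_of_nonpos_of_nonneg (hneg _) (by positivity)
  · rw [hder, mul_pow, Real.sq_sqrt (by positivity), hsq]
    ring
end
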